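/- arXiv:1211.4246 — 3 statements merged into one kernel-verified Lean document; each statement's English description precedes it below -/
import Mathlib

section
/- Let p : ℝ^d → ℝ be a smooth probability density function with p(x) ≠ 0 for all x ∈ ℝ^d. For each σ > 0, let r_σ : ℝ^d → ℝ^d be a twice continuously differentiable function that minimizes the RCAE loss L_σ among all twice continuously differentiable functions with finite loss. Then for every fixed x ∈ ℝ^d, ‖r_σ(x) − x − σ² ∇log p(x)‖₂ = o(σ²) as σ → 0⁺. -/
/-!
Fix a coordinate `i` and let `z = (r_σ - x)_i / σ² - ∂_i log p` be the rescaled error; the claim is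
that `z → 0` pointwise. The density `p` may behave arbitrarily badly at infinity, so the argument is
local, apart from one crude global bound.

* First variation gives the Euler–Lagrange equation `r_i - x_i = σ² (Δ r_i + ∇log p · ∇r_i)`
  (`euler_lagrange`), which decouples over coordinates. Hence
  `z = σ² (∇log p · ∇z + Δz + G)` with `G` smooth and independent of `σ` (`err_equation`).
* Comparing with the identity map, `∫ p |r_σ - x|² ≤ σ² d` (`l2_bound`), so `∫ χ z² = O(σ⁻²)` for
  every cutoff `χ` (`locRate_err`).
* On a compact set and for small `σ`, Young's inequality absorbs the drift and yields
  `σ² Δ(z²) ≥ z² - M σ⁴` (`lap_sq_ge`).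
* Testing this with a cutoff `ψ` and integrating by parts,
  `∫ ψ z² ≤ σ² ∫ |Δψ| z² + O(σ⁴)`. Each use gains a factor `σ²` (`LocRate.improve`), so two uses
  give `∫ χ z² = O(σ²)`.
* As `Δ(z²) ≥ -M σ²` near `x`, the mean value inequality (`mean_value_ineq`) bounds `z(x)²` by a
  local average of `z²` plus `O(σ²)`, which tends to `0` (`tendsto_zero_of_locRate`).
-/

open MeasureTheory Real Filter Topology Asymptotics

/-- The squared Frobenius norm of a linear map `ℝ^d → ℝ^d`, computed as the sum of the
squared Euclidean norms of the images of the standard basis vectors. -/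
noncomputable def frobSq (d : ℕ)
    (f : EuclideanSpace ℝ (Fin d) →L[ℝ] EuclideanSpace ℝ (Fin d)) : ℝ :=
  ∑ j : Fin d, ‖f (EuclideanSpace.single j 1)‖ ^ 2

/-- The RCAE loss:
`L_σ(r) = ∫ p(x) [‖r(x) − x‖² + σ² ‖Dr(x)‖_F²] dx`. -/
noncomputable def rcaeLoss (d : ℕ) (σ : ℝ) (p : EuclideanSpace ℝ (Fin d) → ℝ)
    (r : EuclideanSpace ℝ (Fin d) → EuclideanSpace ℝ (Fin d)) : ℝ :=
  ∫ x, p x * (‖r x - x‖ ^ 2 + σ ^ 2 * frobSq d (fderiv ℝ r x))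

/-! ### Directional derivatives and integration by parts -/

/-- The directional derivative `∂_j f` along the `j`-th standard basis vector. -/
noncomputable def pd {d : ℕ} (j : Fin d) (f : EuclideanSpace ℝ (Fin d) → ℝ)
    (x : EuclideanSpace ℝ (Fin d)) : ℝ :=
  fderiv ℝ f x (EuclideanSpace.single j 1)

/-- The flat Laplacian `∑_j ∂_j ∂_j f`. -/
noncomputable def lap {d : ℕ} (f : EuclideanSpace ℝ (Fin d) → ℝ)
    (x : EuclideanSpace ℝ (Fin d)) : ℝ :=
  ∑ j, pd j (pd j f) x

section Calculus

variable {d : ℕ} {f g : EuclideanSpace ℝ (Fin d) → ℝ}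

lemma contDiff_pd {m n : WithTop ℕ∞} (hf : ContDiff ℝ n f) (hmn : m + 1 ≤ n) (j : Fin d) :
    ContDiff ℝ m (pd j f) :=
  (hf.fderiv_right hmn).clm_apply contDiff_const

lemma contDiff_one_pd (hf : ContDiff ℝ 2 f) (j : Fin d) : ContDiff ℝ 1 (pd j f) :=
  contDiff_pd hf (by norm_num) j

lemma continuous_pd (hf : ContDiff ℝ 1 f) (j : Fin d) : Continuous (pd j f) :=
  (contDiff_pd (m := 0) hf (by norm_num) j).continuous

lemma continuous_pd_pd (hf : ContDiff ℝ 2 f) (i j : Fin d) : Continuous (pd i (pd j f)) :=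
  continuous_pd (contDiff_one_pd hf j) i

lemma continuous_lap (hf : ContDiff ℝ 2 f) : Continuous (lap f) :=
  continuous_finsetSum _ fun j _ => continuous_pd_pd hf j j

lemma hasCompactSupport_pd (hf : HasCompactSupport f) (j : Fin d) :
    HasCompactSupport (pd j f) :=
  hf.fderiv_apply ℝ _

lemma hasCompactSupport_lap (hf : HasCompactSupport f) : HasCompactSupport (lap f) := by
  have h : tsupport (lap f) ⊆ tsupport f := by
    apply closure_minimal _ (isClosed_tsupport f)
    intro x hx
    by_contra hxf
    apply hx
    refine Finset.sum_eq_zero fun j _ => ?_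
    have h1 : tsupport (pd j (pd j f)) ⊆ tsupport f :=
      (tsupport_fderiv_apply_subset ℝ _).trans (tsupport_fderiv_apply_subset ℝ _)
    exact image_eq_zero_of_notMem_tsupport fun h => hxf (h1 h)
  exact hf.of_isClosed_subset (isClosed_tsupport _) h

lemma pd_mul (hf : ContDiff ℝ 1 f) (hg : ContDiff ℝ 1 g) (j : Fin d) :
    pd j (fun x => f x * g x) = fun x => pd j f x * g x + f x * pd j g x := by
  funext x
  have h1 := (hf.differentiable (by norm_num)).differentiableAt (x := x)
  have h2 := (hg.differentiable (by norm_num)).differentiableAt (x := x)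
  simp [pd, fderiv_fun_mul h1 h2]
  ring

lemma pd_add (hf : ContDiff ℝ 1 f) (hg : ContDiff ℝ 1 g) (j : Fin d) :
    pd j (fun x => f x + g x) = fun x => pd j f x + pd j g x := by
  funext x
  have h1 := (hf.differentiable (by norm_num)).differentiableAt (x := x)
  have h2 := (hg.differentiable (by norm_num)).differentiableAt (x := x)
  simp [pd, fderiv_fun_add h1 h2]

lemma pd_const_mul (hf : ContDiff ℝ 1 f) (c : ℝ) (j : Fin d) :
    pd j (fun x => c * f x) = fun x => c * pd j f x := by
  funext x
  have h1 := (hf.differentiable (by norm_num)).differentiableAt (x := x)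
  simp [pd, fderiv_const_mul h1]

lemma lap_sq (hf : ContDiff ℝ 2 f) (x : EuclideanSpace ℝ (Fin d)) :
    lap (fun y => f y ^ 2) x = 2 * ∑ j, pd j f x ^ 2 + 2 * f x * lap f x := by
  have h1 : ContDiff ℝ 1 f := hf.of_le (by norm_num)
  have key : ∀ j, pd j (pd j (fun y => f y ^ 2)) x
      = 2 * pd j f x ^ 2 + 2 * f x * pd j (pd j f) x := by
    intro j
    have hj := contDiff_one_pd hf j
    have : pd j (fun y => f y ^ 2) = fun y => 2 * (f y * pd j f y) := by
      simp only [pow_two]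
      rw [pd_mul h1 h1]
      funext y
      ring
    rw [this, pd_const_mul (h1.mul hj), pd_mul h1 hj]
    ring
  simp only [lap, key, Finset.sum_add_distrib, Finset.mul_sum]

lemma integral_mul_pd (hf : ContDiff ℝ 1 f) (hfc : HasCompactSupport f)
    (hg : ContDiff ℝ 1 g) (j : Fin d) :
    ∫ x, f x * pd j g x = -∫ x, pd j f x * g x := by
  refine integral_mul_fderiv_eq_neg_fderiv_mul_of_integrable ?_ ?_ ?_ ?_ ?_
  · exact ((continuous_pd hf j).mul hg.continuous).integrable_of_hasCompactSupport
      (hasCompactSupport_pd hfc j).mul_right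
  · exact (hf.continuous.mul (continuous_pd hg j)).integrable_of_hasCompactSupport hfc.mul_right
  · exact (hf.continuous.mul hg.continuous).integrable_of_hasCompactSupport hfc.mul_right
  · exact fun x _ => (hf.differentiable (by norm_num)).differentiableAt
  · exact fun x _ => (hg.differentiable (by norm_num)).differentiableAt

lemma integral_mul_lap (hf : ContDiff ℝ 2 f) (hfc : HasCompactSupport f)
    (hg : ContDiff ℝ 2 g) :
    ∫ x, f x * lap g x = ∫ x, lap f x * g x := by
  have hf1 : ContDiff ℝ 1 f := hf.of_le (by norm_num)
  have hg1 : ContDiff ℝ 1 g := hg.of_le (by norm_num)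
  simp only [lap, Finset.mul_sum, Finset.sum_mul]
  rw [integral_finsetSum, integral_finsetSum]
  · refine Finset.sum_congr rfl fun j _ => ?_
    rw [integral_mul_pd hf1 hfc (contDiff_one_pd hg j) j,
      integral_mul_pd (contDiff_one_pd hf j) (hasCompactSupport_pd hfc j) hg1 j |> neg_eq_iff_eq_neg.mpr]
  · exact fun j _ => ((continuous_pd_pd hf j j).mul hg.continuous).integrable_of_hasCompactSupport
      (hasCompactSupport_pd (hasCompactSupport_pd hfc j) j).mul_right
  · exact fun j _ => (hf.continuous.mul (continuous_pd_pd hg j j)).integrable_of_hasCompactSupport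
      hfc.mul_right

end Calculus

/-! ### A mean value inequality -/

section MeanValue

variable {d : ℕ}

lemma hasDerivAt_max_sq (s : ℝ) :
    HasDerivAt (fun s : ℝ => max 0 s ^ 2) (2 * max 0 s) s := by
  rcases lt_trichotomy s 0 with h | rfl | h
  · rw [max_eq_left h.le, mul_zero]
    refine (hasDerivAt_const s (0 : ℝ)).congr_of_eventuallyEq ?_
    filter_upwards [Iio_mem_nhds h] with y hy
    simp [max_eq_left (le_of_lt (Set.mem_Iio.1 hy))]
  · have h0 : HasDerivAt (fun s : ℝ => s ^ 2) 0 0 := by simpa using hasDerivAt_pow 2 (0 : ℝ)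
    rw [hasDerivAt_iff_isLittleO_nhds_zero] at h0 ⊢
    refine IsBigO.trans_isLittleO (IsBigO.of_bound 1 (Eventually.of_forall fun y => ?_)) h0
    simp only [zero_add, max_self, mul_zero, smul_zero, sub_zero, one_mul, Real.norm_eq_abs]
    rw [zero_pow two_ne_zero, sub_zero, sub_zero, abs_of_nonneg (sq_nonneg _),
      abs_of_nonneg (sq_nonneg _)]
    rcases le_total 0 y with hy | hy
    · rw [max_eq_right hy]
    · rw [max_eq_left hy, zero_pow two_ne_zero]; positivity
  · rw [max_eq_right h.le]
    have h0 : HasDerivAt (fun s : ℝ => s ^ 2) (2 * s) s := by simpa using hasDerivAt_pow 2 s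
    refine h0.congr_of_eventuallyEq ?_
    filter_upwards [Ioi_mem_nhds h] with y hy
    rw [max_eq_right (le_of_lt (Set.mem_Ioi.1 hy))]

/-- The radial `C¹` potential `(1 - ‖y‖²)₊²`; its gradient is `-bump y • y`. -/
noncomputable def pot (y : EuclideanSpace ℝ (Fin d)) : ℝ := max 0 (1 - ‖y‖ ^ 2) ^ 2

/-- The radial weight `4 (1 - ‖y‖²)₊` against which averages are taken. -/
noncomputable def bump (y : EuclideanSpace ℝ (Fin d)) : ℝ := 4 * max 0 (1 - ‖y‖ ^ 2)

lemma hasFDerivAt_pot (y : EuclideanSpace ℝ (Fin d)) :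
    HasFDerivAt pot (-(bump y • innerSL ℝ y)) y := by
  have h1 : HasFDerivAt (fun y : EuclideanSpace ℝ (Fin d) => 1 - ‖y‖ ^ 2)
      (-(2 • innerSL ℝ y)) y := (hasStrictFDerivAt_norm_sq y).hasFDerivAt.const_sub 1
  have h2 := (hasDerivAt_max_sq (1 - ‖y‖ ^ 2)).comp_hasFDerivAt y h1
  have h3 : (2 * max 0 (1 - ‖y‖ ^ 2)) • -(2 • innerSL ℝ y) = -(bump y • innerSL ℝ y) := by
    ext v
    simp [bump]
    ring
  exact h3 ▸ h2

lemma continuous_bump : Continuous (bump (d := d)) := by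
  unfold bump; fun_prop

lemma contDiff_pot : ContDiff ℝ 1 (pot (d := d)) := by
  rw [contDiff_one_iff_fderiv]
  refine ⟨fun y => (hasFDerivAt_pot y).differentiableAt, ?_⟩
  have : fderiv ℝ (pot (d := d)) = fun y => -(bump y • innerSL ℝ y) :=
    funext fun y => (hasFDerivAt_pot y).fderiv
  rw [this]
  exact (continuous_bump.smul (innerSL ℝ).continuous).neg

lemma pd_pot (j : Fin d) (y : EuclideanSpace ℝ (Fin d)) : pd j pot y = -(bump y * y j) := by
  simp [pd, (hasFDerivAt_pot y).fderiv, EuclideanSpace.inner_single_right]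

lemma bump_eq_zero {y : EuclideanSpace ℝ (Fin d)} (hy : y ∉ Metric.closedBall 0 1) :
    bump y = 0 := by
  simp only [Metric.mem_closedBall, dist_zero_right, not_le] at hy
  rw [bump, max_eq_left (by nlinarith), mul_zero]

lemma pot_eq_zero {y : EuclideanSpace ℝ (Fin d)} (hy : y ∉ Metric.closedBall 0 1) :
    pot y = 0 := by
  simp only [Metric.mem_closedBall, dist_zero_right, not_le] at hy
  rw [pot, max_eq_left (by nlinarith), zero_pow two_ne_zero]

lemma bump_nonneg (y : EuclideanSpace ℝ (Fin d)) : 0 ≤ bump y := by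
  unfold bump; positivity

lemma pot_nonneg (y : EuclideanSpace ℝ (Fin d)) : 0 ≤ pot y := by
  unfold pot; positivity

lemma hasCompactSupport_bump : HasCompactSupport (bump (d := d)) :=
  HasCompactSupport.intro (isCompact_closedBall 0 1) fun _ hy => bump_eq_zero hy

lemma hasCompactSupport_pot : HasCompactSupport (pot (d := d)) :=
  HasCompactSupport.intro (isCompact_closedBall 0 1) fun _ hy => pot_eq_zero hy

lemma integral_bump_pos : 0 < ∫ y : EuclideanSpace ℝ (Fin d), bump y :=
  continuous_bump.integral_pos_of_hasCompactSupport_nonneg_nonzero (x := 0)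
    hasCompactSupport_bump bump_nonneg (by simp [bump])

/-- Derivative of the weighted average over a ball with respect to its radius. -/
lemma hasDerivAt_average {q : EuclideanSpace ℝ (Fin d) → ℝ} (hq : ContDiff ℝ 1 q)
    (x : EuclideanSpace ℝ (Fin d)) (t : ℝ) :
    HasDerivAt (fun t : ℝ => ∫ y, bump y * q (x + t • y))
      (∫ y, bump y * fderiv ℝ q (x + t • y) y) t := by
  have hF' : Continuous (fun z : ℝ × EuclideanSpace ℝ (Fin d) =>
      bump z.2 * fderiv ℝ q (x + z.1 • z.2) z.2) := by
    have := continuous_bump (d := d)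
    have h2 := hq.continuous_fderiv (by norm_num)
    exact (this.comp continuous_snd).mul ((h2.comp (by fun_prop)).clm_apply continuous_snd)
  have hF : Continuous (fun z : ℝ × EuclideanSpace ℝ (Fin d) => bump z.2 * q (x + z.1 • z.2)) := by
    have := continuous_bump (d := d)
    exact (this.comp continuous_snd).mul (hq.continuous.comp (by fun_prop))
  obtain ⟨C, hC⟩ := ((isCompact_closedBall t 1).prod
    (isCompact_closedBall (0 : EuclideanSpace ℝ (Fin d)) 1)).exists_bound_of_continuousOn
    hF'.continuousOn
  have hsub : ∀ t : ℝ, Continuous fun y : EuclideanSpace ℝ (Fin d) => (t, y) :=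
    fun t => by fun_prop
  refine (hasDerivAt_integral_of_dominated_loc_of_deriv_le (s := Metric.closedBall t 1)
    (F := fun (t : ℝ) y => bump y * q (x + t • y))
    (F' := fun (t : ℝ) y => bump y * fderiv ℝ q (x + t • y) y)
    (bound := (Metric.closedBall (0 : EuclideanSpace ℝ (Fin d)) 1).indicator fun _ => C)
    (Metric.closedBall_mem_nhds t one_pos) ?_ ?_ ?_ ?_ ?_ ?_).2
  · exact Eventually.of_forall fun s => (hF.comp (hsub s)).aestronglyMeasurable
  · exact (hF.comp (hsub t)).integrable_of_hasCompactSupport hasCompactSupport_bump.mul_right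
  · exact (hF'.comp (hsub t)).aestronglyMeasurable
  · refine Eventually.of_forall fun y s hs => ?_
    by_cases hy : y ∈ Metric.closedBall (0 : EuclideanSpace ℝ (Fin d)) 1
    · rw [Set.indicator_of_mem hy]
      exact hC (s, y) ⟨hs, hy⟩
    · rw [Set.indicator_of_notMem hy, bump_eq_zero hy]
      simp
  · exact (integrable_indicator_iff measurableSet_closedBall).2
      (integrableOn_const measure_closedBall_lt_top.ne)
  · refine Eventually.of_forall fun y s _ => ?_
    have h1 : HasDerivAt (fun s : ℝ => x + s • y) y s := by
      simpa using (HasDerivAt.smul_const (hasDerivAt_id s) y).const_add x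
    have h2 : HasFDerivAt q (fderiv ℝ q (x + s • y)) (x + s • y) :=
      (hq.differentiable (by norm_num)).differentiableAt.hasFDerivAt
    exact (h2.comp_hasDerivAt s h1).const_mul _

lemma sum_pd_mul (q : EuclideanSpace ℝ (Fin d) → ℝ) (x y : EuclideanSpace ℝ (Fin d)) :
    fderiv ℝ q x y = ∑ j, y j * pd j q x := by
  have : y = ∑ j, y j • EuclideanSpace.single j (1 : ℝ) := by
    ext i
    simp [Finset.sum_apply, Pi.single_apply]
  conv_lhs => rw [this]
  simp [pd]

/-- The radial derivative of an average is an average of the Laplacian, because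
`bump y • y = -∇ pot y`. -/
lemma integral_bump_fderiv {q : EuclideanSpace ℝ (Fin d) → ℝ} (hq : ContDiff ℝ 2 q)
    (x : EuclideanSpace ℝ (Fin d)) (t : ℝ) :
    ∫ y, bump y * fderiv ℝ q (x + t • y) y = t * ∫ y, pot y * lap q (x + t • y) := by
  have hsh : ContDiff ℝ 1 fun y : EuclideanSpace ℝ (Fin d) => x + t • y := by fun_prop
  have hg : ∀ j, ContDiff ℝ 1 fun y => pd j q (x + t • y) := fun j =>
    (contDiff_one_pd hq j).comp hsh
  have hpd : ∀ j y, pd j (fun y => pd j q (x + t • y)) y = t * pd j (pd j q) (x + t • y) := by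
    intro j y
    have h1 : HasFDerivAt (fun y : EuclideanSpace ℝ (Fin d) => x + t • y)
        (t • ContinuousLinearMap.id ℝ _) y := ((hasFDerivAt_id y).const_smul t).const_add x
    have h2 := (((contDiff_one_pd hq j).differentiable
      (by norm_num)).differentiableAt (x := x + t • y)).hasFDerivAt
    have h3 := h2.comp y h1
    rw [pd, show (fun y => pd j q (x + t • y)) = pd j q ∘ fun y => x + t • y from rfl, h3.fderiv]
    simp [pd]
  have e1 : ∀ y, bump y * fderiv ℝ q (x + t • y) y
      = ∑ j, -(pd j pot y * pd j q (x + t • y)) := by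
    intro y
    rw [sum_pd_mul, Finset.mul_sum]
    refine Finset.sum_congr rfl fun j _ => ?_
    rw [pd_pot]; ring
  have e2 : ∀ y, t * (pot y * lap q (x + t • y))
      = ∑ j, pot y * pd j (fun y => pd j q (x + t • y)) y := by
    intro y
    simp only [hpd, lap, Finset.mul_sum]
    exact Finset.sum_congr rfl fun j _ => by ring
  rw [← integral_const_mul]
  simp only [e1, e2]
  rw [integral_finsetSum, integral_finsetSum]
  · refine Finset.sum_congr rfl fun j _ => ?_
    rw [integral_mul_pd contDiff_pot hasCompactSupport_pot (hg j) j, integral_neg]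
  · exact fun j _ => (contDiff_pot.continuous.mul
      (continuous_pd (hg j) j)).integrable_of_hasCompactSupport hasCompactSupport_pot.mul_right
  · exact fun j _ => (((continuous_pd contDiff_pot j).mul
      (hg j).continuous).integrable_of_hasCompactSupport
      (hasCompactSupport_pd hasCompactSupport_pot j).mul_right).neg

/-- Mean value inequality for functions whose Laplacian is bounded below: the average of `q` with
weight `bump` over the ball of radius `t` has derivative `t ∫ pot · Δq ≥ -M ∫ pot` on `[0, 1]`,
and at `t = 0` it is `q x` times the mass of `bump`. -/
lemma mean_value_ineq {q : EuclideanSpace ℝ (Fin d) → ℝ} (hq : ContDiff ℝ 2 q)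
    (x : EuclideanSpace ℝ (Fin d)) {M : ℝ} (hM : 0 ≤ M)
    (hlap : ∀ y ∈ Metric.closedBall x 1, -M ≤ lap q y) :
    q x * ∫ y : EuclideanSpace ℝ (Fin d), bump y
      ≤ (∫ y, bump y * q (x + y)) + M * ∫ y : EuclideanSpace ℝ (Fin d), pot y := by
  set m : ℝ → ℝ := fun t => ∫ y, bump y * q (x + t • y) with hm
  have hq1 : ContDiff ℝ 1 q := hq.of_le (by norm_num)
  have hd : ∀ t, HasDerivAt m (t * ∫ y, pot y * lap q (x + t • y)) t := fun t => by
    rw [← integral_bump_fderiv hq]; exact hasDerivAt_average hq1 x t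
  have hpot : 0 ≤ ∫ y : EuclideanSpace ℝ (Fin d), pot y := integral_nonneg pot_nonneg
  obtain ⟨t, ⟨ht0, ht1⟩, ht⟩ := exists_hasDerivAt_eq_slope m _ (zero_lt_one' ℝ)
    (fun t _ => (hd t).continuousAt.continuousWithinAt) (fun t _ => hd t)
  have hlow : -M * ∫ y : EuclideanSpace ℝ (Fin d), pot y ≤ ∫ y, pot y * lap q (x + t • y) := by
    rw [← integral_const_mul]
    refine integral_mono ?_ ?_ fun y => ?_
    · exact (contDiff_pot.continuous.integrable_of_hasCompactSupport
        hasCompactSupport_pot).const_mul _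
    · exact (contDiff_pot.continuous.mul ((continuous_lap hq).comp
        (by fun_prop))).integrable_of_hasCompactSupport hasCompactSupport_pot.mul_right
    · by_cases hy : y ∈ Metric.closedBall (0 : EuclideanSpace ℝ (Fin d)) 1
      · have h1 : x + t • y ∈ Metric.closedBall x 1 := by
          simp only [Metric.mem_closedBall, dist_zero_right, dist_self_add_left, norm_smul,
            Real.norm_eq_abs, abs_of_pos ht0] at hy ⊢
          nlinarith [norm_nonneg y]
        have := mul_le_mul_of_nonneg_left (hlap _ h1) (pot_nonneg y)
        simpa [mul_comm] using this
      · simp [pot_eq_zero hy]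
  have h0 : m 0 = q x * ∫ y : EuclideanSpace ℝ (Fin d), bump y := by
    simp only [hm, zero_smul, add_zero, ← integral_const_mul, mul_comm]
  have h1 : m 1 = ∫ y, bump y * q (x + y) := by simp [hm]
  rw [← h0, ← h1]
  have h2 : m 1 - m 0 = t * ∫ y, pot y * lap q (x + t • y) := by rw [ht]; ring
  nlinarith [mul_nonneg hM hpot]

end MeanValue

/-! ### Interior convergence for the singularly perturbed equation -/

section Interior

variable {d : ℕ}

/-- Squares of solutions of `z = σ² (b·∇z + Δz + G)` satisfy a differential inequality in which
the drift has disappeared: it is absorbed by `2 |∇z|²` and by half of the zeroth-order term. -/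
lemma lap_sq_ge {z : EuclideanSpace ℝ (Fin d) → ℝ} (hz : ContDiff ℝ 2 z) {σ B N : ℝ}
    {b : Fin d → ℝ} {G : ℝ} {x : EuclideanSpace ℝ (Fin d)}
    (heq : z x = σ ^ 2 * (∑ j, b j * pd j z x + lap z x + G))
    (hB : ∑ j, b j ^ 2 ≤ B) (hN : |G| ≤ N) (hσB : σ ^ 2 * B ≤ 1) :
    z x ^ 2 - 2 * N ^ 2 * σ ^ 4 ≤ σ ^ 2 * lap (fun y => z y ^ 2) x := by
  rw [lap_sq hz]
  have hG : G ^ 2 ≤ N ^ 2 := sq_le_sq' (by linarith [neg_abs_le G]) ((le_abs_self G).trans hN)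
  have h1 : 2 * z x * ∑ j, b j * pd j z x
      ≤ 2 * ∑ j, pd j z x ^ 2 + z x ^ 2 / 2 * ∑ j, b j ^ 2 := by
    simp only [Finset.mul_sum, ← Finset.sum_add_distrib]
    refine Finset.sum_le_sum fun j _ => ?_
    nlinarith [sq_nonneg (2 * pd j z x - z x * b j)]
  have h2 : z x ^ 2 / 2 * ∑ j, b j ^ 2 ≤ z x ^ 2 / 2 * B :=
    mul_le_mul_of_nonneg_left hB (by positivity)
  have h3 := mul_le_mul_of_nonneg_left (h1.trans (by linarith [h2] :
    _ ≤ 2 * ∑ j, pd j z x ^ 2 + z x ^ 2 / 2 * B)) (sq_nonneg σ)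
  have h4 : z x ^ 2 / 2 * (σ ^ 2 * B) ≤ z x ^ 2 / 2 * 1 :=
    mul_le_mul_of_nonneg_left hσB (by positivity)
  have h5 : 0 ≤ (z x - 2 * σ ^ 2 * G) ^ 2 := sq_nonneg _
  have h6 : σ ^ 4 * G ^ 2 ≤ σ ^ 4 * N ^ 2 := mul_le_mul_of_nonneg_left hG (by positivity)
  have h7 : 2 * z x * z x = 2 * z x * (σ ^ 2 * (∑ j, b j * pd j z x + lap z x + G)) := by
    rw [← heq]
  nlinarith

lemma exists_smooth_ge {χ : EuclideanSpace ℝ (Fin d) → ℝ} (hχ : Continuous χ)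
    (hχc : HasCompactSupport χ) :
    ∃ ψ : EuclideanSpace ℝ (Fin d) → ℝ, ContDiff ℝ 2 ψ ∧ HasCompactSupport ψ ∧
      (∀ x, 0 ≤ ψ x) ∧ ∀ x, χ x ≤ ψ x := by
  obtain ⟨C, hC⟩ := hχ.bounded_above_of_compact_support hχc
  obtain ⟨R, hR⟩ := hχc.isCompact.isBounded.subset_closedBall 0
  have hC0 : 0 ≤ C := (norm_nonneg _).trans (hC 0)
  let β : ContDiffBump (0 : EuclideanSpace ℝ (Fin d)) :=
    ⟨max R 1, max R 1 + 1, by positivity, by linarith⟩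
  refine ⟨fun x => C * β x, contDiff_const.mul β.contDiff, β.hasCompactSupport.mul_left,
    fun x => mul_nonneg hC0 β.nonneg, fun x => ?_⟩
  by_cases hx : x ∈ tsupport χ
  · have h1 : x ∈ Metric.closedBall 0 β.rIn :=
      Metric.closedBall_subset_closedBall (le_max_left R 1) (hR hx)
    simp only [β.one_of_mem_closedBall h1, mul_one]
    exact (le_abs_self _).trans (hC x)
  · rw [image_eq_zero_of_notMem_tsupport hx]
    exact mul_nonneg hC0 β.nonneg

/-- `LocRate z ρ`: all local weighted `L²` norms of `z σ` satisfy `∫ χ z² = O(ρ σ)` as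
`σ → 0⁺`. -/
def LocRate (z : ℝ → EuclideanSpace ℝ (Fin d) → ℝ) (ρ : ℝ → ℝ) : Prop :=
  ∀ χ : EuclideanSpace ℝ (Fin d) → ℝ, Continuous χ → HasCompactSupport χ → (∀ x, 0 ≤ χ x) →
    ∃ C, ∀ᶠ σ in 𝓝[>] (0 : ℝ), ∫ x, χ x * z σ x ^ 2 ≤ C * ρ σ

variable {z : ℝ → EuclideanSpace ℝ (Fin d) → ℝ} {b : Fin d → EuclideanSpace ℝ (Fin d) → ℝ}
  {G : EuclideanSpace ℝ (Fin d) → ℝ}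

lemma eventually_lap_sq_ge (hz : ∀ σ > 0, ContDiff ℝ 2 (z σ)) (hb : ∀ j, Continuous (b j))
    (hG : Continuous G)
    (heq : ∀ σ > 0, ∀ x, z σ x = σ ^ 2 * (∑ j, b j x * pd j (z σ) x + lap (z σ) x + G x))
    {K : Set (EuclideanSpace ℝ (Fin d))} (hK : IsCompact K) :
    ∃ M : ℝ, 0 ≤ M ∧ ∀ᶠ σ in 𝓝[>] (0 : ℝ), ∀ x ∈ K,
      z σ x ^ 2 - M * σ ^ 4 ≤ σ ^ 2 * lap (fun y => z σ y ^ 2) x := by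
  obtain ⟨N, hN⟩ := hK.exists_bound_of_continuousOn hG.continuousOn
  have hb2 : Continuous fun x => ∑ j, b j x ^ 2 :=
    continuous_finsetSum _ fun j _ => (hb j).pow 2
  obtain ⟨B, hB⟩ := hK.exists_bound_of_continuousOn hb2.continuousOn
  refine ⟨2 * N ^ 2, by positivity, ?_⟩
  have h1 : ∀ᶠ σ in 𝓝[>] (0 : ℝ), σ ^ 2 * B < 1 := by
    have : Tendsto (fun σ : ℝ => σ ^ 2 * B) (𝓝[>] 0) (𝓝 (0 ^ 2 * B)) :=
      (Continuous.tendsto (by fun_prop) _).mono_left nhdsWithin_le_nhds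
    exact this.eventually (gt_mem_nhds (by norm_num))
  filter_upwards [h1, self_mem_nhdsWithin] with σ hσB hσ x hx
  exact lap_sq_ge (hz σ hσ) (heq σ hσ x) ((le_abs_self _).trans (hB x hx)) (hN x hx) hσB.le

/-- Each Caccioppoli-type step, moving the Laplacian onto a larger cutoff, gains a factor
`σ²`. -/
lemma LocRate.improve (hz : ∀ σ > 0, ContDiff ℝ 2 (z σ)) (hb : ∀ j, Continuous (b j))
    (hG : Continuous G)
    (heq : ∀ σ > 0, ∀ x, z σ x = σ ^ 2 * (∑ j, b j x * pd j (z σ) x + lap (z σ) x + G x))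
    {ρ : ℝ → ℝ} (hρ : ∀ σ, 0 ≤ ρ σ) (h : LocRate z ρ) :
    LocRate z fun σ => σ ^ 2 * (ρ σ + σ ^ 2) := by
  intro χ hχ hχc _
  obtain ⟨ψ, hψ, hψc, hψ0, hψχ⟩ := exists_smooth_ge hχ hχc
  obtain ⟨M, hM, hlap⟩ := eventually_lap_sq_ge hz hb hG heq hψc.isCompact
  have habs : HasCompactSupport fun x => |lap ψ x| :=
    HasCompactSupport.comp_left (g := fun t : ℝ => |t|) (hasCompactSupport_lap hψc) abs_zero
  obtain ⟨C, hC⟩ := h (fun x => |lap ψ x|) (continuous_lap hψ).abs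
    habs (fun x => abs_nonneg _)
  refine ⟨max C (M * ∫ x, ψ x), ?_⟩
  filter_upwards [hlap, hC, self_mem_nhdsWithin] with σ hl hCσ hσ
  have hzs : ContDiff ℝ 2 fun x => z σ x ^ 2 := (hz σ hσ).pow 2
  have hzc := hzs.continuous
  have hI1 : Integrable fun x => ψ x * z σ x ^ 2 :=
    (hψ.continuous.mul hzc).integrable_of_hasCompactSupport hψc.mul_right
  have hI2 : Integrable fun x => ψ x * lap (fun y => z σ y ^ 2) x :=
    (hψ.continuous.mul (continuous_lap hzs)).integrable_of_hasCompactSupport hψc.mul_right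
  have hI3 : Integrable ψ := hψ.continuous.integrable_of_hasCompactSupport hψc
  calc ∫ x, χ x * z σ x ^ 2 ≤ ∫ x, ψ x * z σ x ^ 2 :=
        integral_mono ((hχ.mul hzc).integrable_of_hasCompactSupport hχc.mul_right) hI1
          fun x => mul_le_mul_of_nonneg_right (hψχ x) (sq_nonneg _)
    _ ≤ ∫ x, (σ ^ 2 * (ψ x * lap (fun y => z σ y ^ 2) x) + M * σ ^ 4 * ψ x) := by
        refine integral_mono hI1 ((hI2.const_mul _).add (hI3.const_mul _)) fun x => ?_
        by_cases hx : x ∈ tsupport ψ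
        · have := mul_le_mul_of_nonneg_left (hl x hx) (hψ0 x)
          simp only
          linarith
        · simp [image_eq_zero_of_notMem_tsupport hx]
    _ = σ ^ 2 * (∫ x, lap ψ x * z σ x ^ 2) + M * σ ^ 4 * ∫ x, ψ x := by
        rw [integral_add (hI2.const_mul _) (hI3.const_mul _), integral_const_mul,
          integral_const_mul, integral_mul_lap hψ hψc hzs]
    _ ≤ σ ^ 2 * (∫ x, |lap ψ x| * z σ x ^ 2) + M * σ ^ 4 * ∫ x, ψ x := by
        gcongr ?_ * ?_ + _
        refine integral_mono ?_ ?_ fun x =>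
          mul_le_mul_of_nonneg_right (le_abs_self _) (sq_nonneg _)
        · exact ((continuous_lap hψ).mul hzc).integrable_of_hasCompactSupport
            (hasCompactSupport_lap hψc).mul_right
        · exact ((continuous_lap hψ).abs.mul hzc).integrable_of_hasCompactSupport
            habs.mul_right
    _ ≤ σ ^ 2 * (C * ρ σ) + M * σ ^ 4 * ∫ x, ψ x := by gcongr
    _ = σ ^ 2 * (C * ρ σ + (M * ∫ x, ψ x) * σ ^ 2) := by ring
    _ ≤ σ ^ 2 * (max C (M * ∫ x, ψ x) * ρ σ + max C (M * ∫ x, ψ x) * σ ^ 2) := by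
        gcongr
        · exact hρ σ
        · exact le_max_left _ _
        · exact le_max_right _ _
    _ = _ := by ring

/-- Pointwise convergence to `0` from a crude a priori local `L²` bound `O(σ⁻²)`: two
improvement steps make the local norms vanish, and the mean value inequality makes this
pointwise. -/
lemma tendsto_zero_of_locRate (hz : ∀ σ > 0, ContDiff ℝ 2 (z σ)) (hb : ∀ j, Continuous (b j))
    (hG : Continuous G)
    (heq : ∀ σ > 0, ∀ x, z σ x = σ ^ 2 * (∑ j, b j x * pd j (z σ) x + lap (z σ) x + G x))
    (h : LocRate z fun σ => (σ ^ 2)⁻¹) (x : EuclideanSpace ℝ (Fin d)) :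
    Tendsto (fun σ => z σ x) (𝓝[>] 0) (𝓝 0) := by
  have h1 : LocRate z fun σ => 1 + σ ^ 4 := by
    intro χ c1 c2 c3
    obtain ⟨C, hC⟩ := h.improve hz hb hG heq (fun σ => by positivity) χ c1 c2 c3
    refine ⟨C, ?_⟩
    filter_upwards [hC, self_mem_nhdsWithin] with σ hσ hσ0
    have : σ ≠ 0 := ne_of_gt hσ0
    convert hσ using 2
    field_simp
  have h2 := h1.improve hz hb hG heq (fun σ => by positivity)
  have hxc : HasCompactSupport fun y : EuclideanSpace ℝ (Fin d) => bump (y - x) := by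
    refine HasCompactSupport.intro (isCompact_closedBall x 1) fun y hy => bump_eq_zero ?_
    simpa [dist_eq_norm] using hy
  obtain ⟨C, hC⟩ := h2 (fun y => bump (y - x)) (continuous_bump.comp (by fun_prop)) hxc
    fun y => bump_nonneg _
  obtain ⟨M, hM, hlap⟩ := eventually_lap_sq_ge hz hb hG heq (isCompact_closedBall x 1)
  set I := ∫ y : EuclideanSpace ℝ (Fin d), bump y with hI
  have hI0 : 0 < I := integral_bump_pos
  set P := ∫ y : EuclideanSpace ℝ (Fin d), pot y
  have hsq : Tendsto (fun σ => z σ x ^ 2) (𝓝[>] 0) (𝓝 0) := by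
    have hlim : Tendsto (fun σ : ℝ => (C * (σ ^ 2 * ((1 + σ ^ 4) + σ ^ 2)) + M * σ ^ 2 * P) / I)
        (𝓝[>] 0) (𝓝 0) := by
      have : Tendsto (fun σ : ℝ => (C * (σ ^ 2 * ((1 + σ ^ 4) + σ ^ 2)) + M * σ ^ 2 * P) / I)
          (𝓝[>] 0) (𝓝 ((C * (0 ^ 2 * ((1 + 0 ^ 4) + 0 ^ 2)) + M * 0 ^ 2 * P) / I)) :=
        (Continuous.tendsto (by fun_prop) _).mono_left nhdsWithin_le_nhds
      simpa using this
    refine tendsto_of_tendsto_of_tendsto_of_le_of_le' tendsto_const_nhds hlim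
      (Eventually.of_forall fun σ => sq_nonneg _) ?_
    filter_upwards [hC, hlap, self_mem_nhdsWithin] with σ hCσ hl hσ
    have hσ0 : (0 : ℝ) < σ := hσ
    rw [le_div_iff₀ hI0]
    have hmv := mean_value_ineq ((hz σ hσ).pow 2) x (M := M * σ ^ 2) (by positivity)
      fun y hy => by
        have h3 := hl y hy
        have h4 : σ ^ 2 * -(M * σ ^ 2) ≤ σ ^ 2 * lap (fun y => z σ y ^ 2) y := by
          nlinarith [sq_nonneg (z σ y)]
        exact le_of_mul_le_mul_left h4 (by positivity)
    have hshift : ∫ y, bump y * z σ (x + y) ^ 2 = ∫ y, bump (y - x) * z σ y ^ 2 := by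
      rw [← integral_add_left_eq_self (fun y => bump (y - x) * z σ y ^ 2) x]
      simp
    rw [hshift] at hmv
    linarith
  have := hsq.sqrt
  simp only [Real.sqrt_sq_eq_abs, Real.sqrt_zero] at this
  exact (tendsto_zero_iff_abs_tendsto_zero _).2 this

end Interior

/-! ### The Euler–Lagrange equation -/

section EulerLagrange

variable {d : ℕ} {p : EuclideanSpace ℝ (Fin d) → ℝ}
  {R : EuclideanSpace ℝ (Fin d) → EuclideanSpace ℝ (Fin d)} {σ : ℝ}

lemma pd_coord_eq (hR : ContDiff ℝ 2 R) (i j : Fin d) (x : EuclideanSpace ℝ (Fin d)) :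
    pd j (fun y => R y i) x = fderiv ℝ R x (EuclideanSpace.single j 1) i := by
  have h1 : HasFDerivAt R (fderiv ℝ R x) x :=
    ((hR.differentiable (by norm_num)).differentiableAt).hasFDerivAt
  have h2 := (EuclideanSpace.proj (𝕜 := ℝ) i).hasFDerivAt.comp x h1
  have h3 : HasFDerivAt (fun y => R y i)
      ((EuclideanSpace.proj (𝕜 := ℝ) i).comp (fderiv ℝ R x)) x := h2
  rw [pd, h3.fderiv]
  rfl

lemma norm_add_single_sq (a : EuclideanSpace ℝ (Fin d)) (c : ℝ) (i : Fin d) :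
    ‖a + c • EuclideanSpace.single i (1 : ℝ)‖ ^ 2 = ‖a‖ ^ 2 + 2 * c * a i + c ^ 2 := by
  rw [norm_add_sq_real, norm_smul, inner_smul_right, EuclideanSpace.inner_single_right]
  simp
  ring

/-- Second-order expansion of the loss density under a perturbation in the `i`-th coordinate. -/
lemma integrand_perturb (hR : ContDiff ℝ 2 R) {ψ : EuclideanSpace ℝ (Fin d) → ℝ}
    (hψ : ContDiff ℝ 2 ψ) (i : Fin d) (t : ℝ) (x : EuclideanSpace ℝ (Fin d)) :
    p x * (‖(R x + (t * ψ x) • EuclideanSpace.single i (1 : ℝ)) - x‖ ^ 2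
      + σ ^ 2 * frobSq d
        (fderiv ℝ (fun y => R y + (t * ψ y) • EuclideanSpace.single i (1 : ℝ)) x))
    = p x * (‖R x - x‖ ^ 2 + σ ^ 2 * frobSq d (fderiv ℝ R x))
      + (2 * t * (p x * ((R x i - x i) * ψ x
          + σ ^ 2 * ∑ j, pd j (fun y => R y i) x * pd j ψ x))
        + t ^ 2 * (p x * (ψ x ^ 2 + σ ^ 2 * ∑ j, pd j ψ x ^ 2))) := by
  have h1 : HasFDerivAt R (fderiv ℝ R x) x :=
    ((hR.differentiable (by norm_num)).differentiableAt).hasFDerivAt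
  have h2 : HasFDerivAt ψ (fderiv ℝ ψ x) x :=
    ((hψ.differentiable (by norm_num)).differentiableAt).hasFDerivAt
  have h3 : ∀ j, fderiv ℝ (fun y => R y + (t * ψ y) • EuclideanSpace.single i (1 : ℝ)) x
      (EuclideanSpace.single j 1) = fderiv ℝ R x (EuclideanSpace.single j 1)
        + (t * pd j ψ x) • EuclideanSpace.single i (1 : ℝ) := by
    intro j
    have h4 : HasFDerivAt (fun y => R y + (t * ψ y) • EuclideanSpace.single i (1 : ℝ)) _ x :=
      h1.add ((h2.const_mul t).smul_const (EuclideanSpace.single i (1 : ℝ)))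
    rw [h4.fderiv]
    simp [pd]
  have h5 : (R x + (t * ψ x) • EuclideanSpace.single i (1 : ℝ)) - x
      = (R x - x) + (t * ψ x) • EuclideanSpace.single i (1 : ℝ) := by abel
  have h6 : frobSq d
      (fderiv ℝ (fun y => R y + (t * ψ y) • EuclideanSpace.single i (1 : ℝ)) x)
      = frobSq d (fderiv ℝ R x) + 2 * t * (∑ j, pd j (fun y => R y i) x * pd j ψ x)
        + t ^ 2 * ∑ j, pd j ψ x ^ 2 := by
    simp only [frobSq, h3, norm_add_single_sq, pd_coord_eq hR, Finset.sum_add_distrib,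
      Finset.mul_sum]
    congr 1
    · congr 1
      exact Finset.sum_congr rfl fun j _ => by ring
    · exact Finset.sum_congr rfl fun j _ => by ring
  rw [h5, h6, norm_add_single_sq]
  simp only [PiLp.sub_apply]
  ring

/-- The loss of `R + t ψ e_i` is a quadratic polynomial in `t` with a minimum at `t = 0`, so its
linear coefficient vanishes. -/
lemma weak_euler_lagrange (hp : ContDiff ℝ 2 p) (hR : ContDiff ℝ 2 R)
    (hfin : Integrable (fun x => p x * (‖R x - x‖ ^ 2 + σ ^ 2 * frobSq d (fderiv ℝ R x))))
    (hmin : ∀ s : EuclideanSpace ℝ (Fin d) → EuclideanSpace ℝ (Fin d), ContDiff ℝ 2 s →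
      Integrable (fun x => p x * (‖s x - x‖ ^ 2 + σ ^ 2 * frobSq d (fderiv ℝ s x))) →
      rcaeLoss d σ p R ≤ rcaeLoss d σ p s)
    (i : Fin d) {ψ : EuclideanSpace ℝ (Fin d) → ℝ} (hψ : ContDiff ℝ 2 ψ)
    (hψc : HasCompactSupport ψ) :
    ∫ x, p x * ((R x i - x i) * ψ x
      + σ ^ 2 * ∑ j, pd j (fun y => R y i) x * pd j ψ x) = 0 := by
  have hRi : ContDiff ℝ 2 fun y => R y i := contDiff_euclidean.1 hR i
  have hψ1 : ContDiff ℝ 1 ψ := hψ.of_le (by norm_num)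
  have hRi1 : ContDiff ℝ 1 fun y => R y i := hRi.of_le (by norm_num)
  have hzero : ∀ x, x ∉ tsupport ψ → ψ x = 0 ∧ ∀ j, pd j ψ x = 0 := fun x hx =>
    ⟨image_eq_zero_of_notMem_tsupport hx, fun j => image_eq_zero_of_notMem_tsupport
      fun h => hx (tsupport_fderiv_apply_subset ℝ _ h)⟩
  have hA : Integrable fun x => p x * ((R x i - x i) * ψ x
      + σ ^ 2 * ∑ j, pd j (fun y => R y i) x * pd j ψ x) := by
    refine Continuous.integrable_of_hasCompactSupport ?_
      (HasCompactSupport.intro hψc.isCompact fun x hx => by simp [hzero x hx])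
    have h1 : Continuous fun x => ∑ j, pd j (fun y => R y i) x * pd j ψ x :=
      continuous_finsetSum _ fun j _ => (continuous_pd hRi1 j).mul (continuous_pd hψ1 j)
    have h2 := hp.continuous
    have h3 := hRi.continuous
    have h4 := hψ.continuous
    fun_prop
  have hB : Integrable fun x => p x * (ψ x ^ 2 + σ ^ 2 * ∑ j, pd j ψ x ^ 2) := by
    refine Continuous.integrable_of_hasCompactSupport ?_
      (HasCompactSupport.intro hψc.isCompact fun x hx => by simp [hzero x hx])
    have h1 : Continuous fun x => ∑ j, pd j ψ x ^ 2 :=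
      continuous_finsetSum _ fun j _ => (continuous_pd hψ1 j).pow 2
    have h2 := hp.continuous
    have h4 := hψ.continuous
    fun_prop
  have key : ∀ t : ℝ, 0 ≤ (∫ x, p x * (ψ x ^ 2 + σ ^ 2 * ∑ j, pd j ψ x ^ 2)) * (t * t)
      + (2 * ∫ x, p x * ((R x i - x i) * ψ x
        + σ ^ 2 * ∑ j, pd j (fun y => R y i) x * pd j ψ x)) * t + 0 := by
    intro t
    have hs : ContDiff ℝ 2 fun y => R y + (t * ψ y) • EuclideanSpace.single i (1 : ℝ) :=
      hR.add ((contDiff_const.mul hψ).smul contDiff_const)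
    have hexp := integrand_perturb (p := p) (σ := σ) hR hψ i t
    have hrest : Integrable fun x => 2 * t * (p x * ((R x i - x i) * ψ x
        + σ ^ 2 * ∑ j, pd j (fun y => R y i) x * pd j ψ x))
        + t ^ 2 * (p x * (ψ x ^ 2 + σ ^ 2 * ∑ j, pd j ψ x ^ 2)) := (hA.const_mul (2 * t)).add (hB.const_mul (t ^ 2))
    have hle := hmin _ hs (by simp only [hexp]; exact hfin.add hrest)
    simp only [rcaeLoss, hexp] at hle
    rw [integral_add hfin hrest] at hle
    rw [integral_add (hA.const_mul (2 * t)) (hB.const_mul (t ^ 2)), integral_const_mul,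
      integral_const_mul] at hle
    linarith
  have := discrim_le_zero key
  rw [discrim] at this
  nlinarith [sq_nonneg (∫ x, p x * ((R x i - x i) * ψ x
        + σ ^ 2 * ∑ j, pd j (fun y => R y i) x * pd j ψ x))]

/-- The Euler–Lagrange equation `p (R_i - x_i) = σ² ∑_j ∂_j (p ∂_j R_i)` in its pointwise form,
with the divergence expanded. -/
lemma euler_lagrange (hp : ContDiff ℝ 2 p) (hR : ContDiff ℝ 2 R)
    (hfin : Integrable (fun x => p x * (‖R x - x‖ ^ 2 + σ ^ 2 * frobSq d (fderiv ℝ R x))))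
    (hmin : ∀ s : EuclideanSpace ℝ (Fin d) → EuclideanSpace ℝ (Fin d), ContDiff ℝ 2 s →
      Integrable (fun x => p x * (‖s x - x‖ ^ 2 + σ ^ 2 * frobSq d (fderiv ℝ s x))) →
      rcaeLoss d σ p R ≤ rcaeLoss d σ p s)
    (i : Fin d) (x : EuclideanSpace ℝ (Fin d)) :
    p x * (R x i - x i) = σ ^ 2 * ∑ j, (pd j p x * pd j (fun y => R y i) x
      + p x * pd j (pd j fun y => R y i) x) := by
  have hRi : ContDiff ℝ 2 fun y => R y i := contDiff_euclidean.1 hR i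
  have hp1 : ContDiff ℝ 1 p := hp.of_le (by norm_num)
  have hF : ∀ j, ContDiff ℝ 1 fun x => p x * pd j (fun y => R y i) x := fun j =>
    hp1.mul (contDiff_one_pd hRi j)
  set W : EuclideanSpace ℝ (Fin d) → ℝ := fun x => p x * (R x i - x i)
    - σ ^ 2 * ∑ j, pd j (fun x => p x * pd j (fun y => R y i) x) x with hW
  have hc1 : Continuous fun x => p x * (R x i - x i) := by
    have h2 := hp.continuous
    have h3 := hRi.continuous
    fun_prop
  have hWc : Continuous W :=
    hc1.sub (continuous_const.mul (continuous_finsetSum _ fun j _ => continuous_pd (hF j) j))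
  have hW0 : W = 0 := by
    refine (Continuous.ae_eq_iff_eq volume hWc continuous_const).1 ?_
    refine ae_eq_zero_of_integral_contDiff_smul_eq_zero hWc.locallyIntegrable ?_
    intro ψ hψ hψc
    have hψ2 : ContDiff ℝ 2 ψ := mod_cast contDiff_infty.1 hψ 2
    have hψ1 : ContDiff ℝ 1 ψ := hψ2.of_le (by norm_num)
    have hI1 : Integrable fun x => ψ x * (p x * (R x i - x i)) :=
      (hψ1.continuous.mul hc1).integrable_of_hasCompactSupport hψc.mul_right
    have hI2 : ∀ j, Integrable fun x =>
        ψ x * pd j (fun x => p x * pd j (fun y => R y i) x) x := fun j =>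
      (hψ1.continuous.mul (continuous_pd (hF j) j)).integrable_of_hasCompactSupport hψc.mul_right
    have hI3 : ∀ j, Integrable fun x => pd j ψ x * (p x * pd j (fun y => R y i) x) := fun j =>
      ((continuous_pd hψ1 j).mul (hF j).continuous).integrable_of_hasCompactSupport
        (hasCompactSupport_pd hψc j).mul_right
    have e1 : ∀ x, ψ x • W x = ψ x * (p x * (R x i - x i))
        - σ ^ 2 * ∑ j, ψ x * pd j (fun x => p x * pd j (fun y => R y i) x) x := by
      intro x
      rw [smul_eq_mul, ← Finset.mul_sum]
      simp only [hW]
      ring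
    have e2 : ∀ x, p x * ((R x i - x i) * ψ x
        + σ ^ 2 * ∑ j, pd j (fun y => R y i) x * pd j ψ x)
        = ψ x * (p x * (R x i - x i))
          + σ ^ 2 * ∑ j, pd j ψ x * (p x * pd j (fun y => R y i) x) := by
      intro x
      have : ∑ j, pd j ψ x * (p x * pd j (fun y => R y i) x)
          = p x * ∑ j, pd j (fun y => R y i) x * pd j ψ x := by
        rw [Finset.mul_sum]
        exact Finset.sum_congr rfl fun j _ => by ring
      rw [this]
      ring
    have hweak := weak_euler_lagrange hp hR hfin hmin i hψ2 hψc
    simp only [e2] at hweak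
    simp only [e1]
    rw [integral_add hI1 ((integrable_finsetSum _ fun j _ => hI3 j).const_mul _),
      integral_const_mul, integral_finsetSum _ fun j _ => hI3 j] at hweak
    rw [integral_sub hI1 ((integrable_finsetSum _ fun j _ => hI2 j).const_mul _),
      integral_const_mul, integral_finsetSum _ fun j _ => hI2 j]
    simp only [fun j => integral_mul_pd hψ1 hψc (hF j) j, Finset.sum_neg_distrib]
    linarith
  have h := congrFun hW0 x
  simp only [hW, Pi.zero_apply, pd_mul hp1 (contDiff_one_pd hRi _)] at h
  linarith

end EulerLagrange

/-! ### The rescaled error -/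

section Error

variable {d : ℕ} {p : EuclideanSpace ℝ (Fin d) → ℝ}

/-- The `j`-th component `∂_j p / p` of the score. -/
noncomputable def score (p : EuclideanSpace ℝ (Fin d) → ℝ) (j : Fin d)
    (x : EuclideanSpace ℝ (Fin d)) : ℝ :=
  pd j p x / p x

/-- The `i`-th component of `(R x - x) / σ² - ∇ log p x`. -/
noncomputable def err (p : EuclideanSpace ℝ (Fin d) → ℝ)
    (R : EuclideanSpace ℝ (Fin d) → EuclideanSpace ℝ (Fin d)) (σ : ℝ) (i : Fin d)
    (x : EuclideanSpace ℝ (Fin d)) : ℝ :=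
  (R x i - x i) / σ ^ 2 - score p i x

lemma gradient_log (hp : ContDiff ℝ 1 p) (hpos : ∀ x, 0 < p x)
    (x : EuclideanSpace ℝ (Fin d)) (i : Fin d) :
    gradient (fun y => Real.log (p y)) x i = score p i x := by
  have h1 : HasFDerivAt p (fderiv ℝ p x) x :=
    ((hp.differentiable (by norm_num)).differentiableAt).hasFDerivAt
  have h2 := (h1.log (hpos x).ne').fderiv
  have h3 : inner ℝ (gradient (fun y => Real.log (p y)) x) (EuclideanSpace.single i (1 : ℝ))
      = gradient (fun y => Real.log (p y)) x i := by
    rw [EuclideanSpace.inner_single_right]; simp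
  rw [← h3, inner_gradient_left, h2, score, pd]
  simp
  ring

lemma contDiff_score (hp : ContDiff ℝ 3 p) (hpos : ∀ x, 0 < p x) (j : Fin d) :
    ContDiff ℝ 2 (score p j) :=
  (contDiff_pd hp (by norm_num) j).div (hp.of_le (by norm_num)) fun x => (hpos x).ne'

lemma pd_coord (i j : Fin d) :
    pd j (fun x : EuclideanSpace ℝ (Fin d) => x i)
      = fun _ => EuclideanSpace.single j (1 : ℝ) i := by
  funext x
  have h : HasFDerivAt (fun x : EuclideanSpace ℝ (Fin d) => x i)
    (EuclideanSpace.proj (𝕜 := ℝ) i) x := (EuclideanSpace.proj (𝕜 := ℝ) i).hasFDerivAt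
  rw [pd, h.fderiv]
  rfl

variable {R : EuclideanSpace ℝ (Fin d) → EuclideanSpace ℝ (Fin d)} {σ : ℝ}

lemma contDiff_err (hp : ContDiff ℝ 3 p) (hpos : ∀ x, 0 < p x) (hR : ContDiff ℝ 2 R)
    (i : Fin d) : ContDiff ℝ 2 (err p R σ i) := by
  have hRi : ContDiff ℝ 2 fun y => R y i := contDiff_euclidean.1 hR i
  have hx : ContDiff ℝ 2 fun y : EuclideanSpace ℝ (Fin d) => y i :=
    contDiff_euclidean.1 contDiff_id i
  exact ((hRi.sub hx).div_const _).sub (contDiff_score hp hpos i)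

/-- The rescaled error solves `z = σ² (∇log p · ∇z + Δz + G)` with `G` independent of `σ`. -/
lemma err_equation (hp : ContDiff ℝ 3 p) (hpos : ∀ x, 0 < p x) (hR : ContDiff ℝ 2 R)
    (hσ : 0 < σ) (i : Fin d)
    (hEL : ∀ x, p x * (R x i - x i) = σ ^ 2 * ∑ j, (pd j p x * pd j (fun y => R y i) x
      + p x * pd j (pd j fun y => R y i) x)) (x : EuclideanSpace ℝ (Fin d)) :
    err p R σ i x = σ ^ 2 * (∑ j, score p j x * pd j (err p R σ i) x + lap (err p R σ i) x
      + (∑ j, score p j x * pd j (score p i) x + lap (score p i) x)) := by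
  have hz := contDiff_err (σ := σ) hp hpos hR i
  have hb := contDiff_score hp hpos i
  have hx : ContDiff ℝ 2 fun y : EuclideanSpace ℝ (Fin d) => y i :=
    contDiff_euclidean.1 contDiff_id i
  have hz1 : ContDiff ℝ 1 (err p R σ i) := hz.of_le (by norm_num)
  have hb1 : ContDiff ℝ 1 (score p i) := hb.of_le (by norm_num)
  have hx1 : ContDiff ℝ 1 fun y : EuclideanSpace ℝ (Fin d) => y i := hx.of_le (by norm_num)
  have hRdec : (fun y => R y i) = fun y => y i + σ ^ 2 * (score p i y + err p R σ i y) := by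
    funext y
    simp only [err]
    field_simp
    ring
  have h1 : ∀ j, pd j (fun y => R y i) = fun y => EuclideanSpace.single j (1 : ℝ) i
      + σ ^ 2 * (pd j (score p i) y + pd j (err p R σ i) y) := by
    intro j
    rw [hRdec, pd_add hx1 (contDiff_const.mul (hb1.add hz1)), pd_coord,
      pd_const_mul (hb1.add hz1), pd_add hb1 hz1]
  have h2 : ∀ j, pd j (pd j fun y => R y i) x
      = σ ^ 2 * (pd j (pd j (score p i)) x + pd j (pd j (err p R σ i)) x) := by
    intro j
    have hbj := contDiff_one_pd hb j
    have hzj := contDiff_one_pd hz j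
    rw [h1, pd_add contDiff_const (contDiff_const.mul (hbj.add hzj)),
      pd_const_mul (hbj.add hzj), pd_add hbj hzj]
    simp [pd]
  have hpx := (hpos x).ne'
  have h3 : R x i - x i = σ ^ 2 * ∑ j, (score p j x * pd j (fun y => R y i) x
      + pd j (pd j fun y => R y i) x) := by
    have h4 : ∑ j, (pd j p x * pd j (fun y => R y i) x + p x * pd j (pd j fun y => R y i) x)
        = p x * ∑ j, (score p j x * pd j (fun y => R y i) x
          + pd j (pd j fun y => R y i) x) := by
      rw [Finset.mul_sum]
      refine Finset.sum_congr rfl fun j _ => ?_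
      rw [score]
      field_simp
    have h5 := hEL x
    rw [h4] at h5
    exact mul_left_cancel₀ hpx (by rw [h5]; ring)
  have h6 : ∑ j, (score p j x * pd j (fun y => R y i) x + pd j (pd j fun y => R y i) x)
      = score p i x + σ ^ 2 * (∑ j, score p j x * pd j (err p R σ i) x + lap (err p R σ i) x
      + (∑ j, score p j x * pd j (score p i) x + lap (score p i) x)) := by
    have h7 : score p i x = ∑ j, score p j x * EuclideanSpace.single j (1 : ℝ) i := by
      simp
    rw [h7]
    simp only [lap, ← Finset.sum_add_distrib, Finset.mul_sum, h2]
    simp only [h1]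
    exact Finset.sum_congr rfl fun j _ => by ring
  rw [h6] at h3
  rw [err, h3]
  field_simp
  ring

lemma frobSq_nonneg (f : EuclideanSpace ℝ (Fin d) →L[ℝ] EuclideanSpace ℝ (Fin d)) :
    0 ≤ frobSq d f := Finset.sum_nonneg fun _ _ => sq_nonneg _

/-- Comparison with the identity map, whose loss is `σ² d`. -/
lemma l2_bound (hp : ContDiff ℝ 3 p) (hpos : ∀ x, 0 < p x) (hp_int : ∫ x, p x = 1)
    (hR : ContDiff ℝ 2 R)
    (hfin : Integrable (fun x => p x * (‖R x - x‖ ^ 2 + σ ^ 2 * frobSq d (fderiv ℝ R x))))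
    (hmin : ∀ s : EuclideanSpace ℝ (Fin d) → EuclideanSpace ℝ (Fin d), ContDiff ℝ 2 s →
      Integrable (fun x => p x * (‖s x - x‖ ^ 2 + σ ^ 2 * frobSq d (fderiv ℝ s x))) →
      rcaeLoss d σ p R ≤ rcaeLoss d σ p s) (i : Fin d) :
    Integrable (fun x => p x * (R x i - x i) ^ 2) ∧
      ∫ x, p x * (R x i - x i) ^ 2 ≤ σ ^ 2 * d := by
  have hRi : ContDiff ℝ 2 fun y => R y i := contDiff_euclidean.1 hR i
  -- `p` is integrable, since a junk value of the integral would be `0`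
  have hpI : Integrable p := by
    by_contra h
    rw [integral_undef h] at hp_int
    exact zero_ne_one hp_int
  have hle : ∀ x, p x * (R x i - x i) ^ 2
      ≤ p x * (‖R x - x‖ ^ 2 + σ ^ 2 * frobSq d (fderiv ℝ R x)) := by
    intro x
    refine mul_le_mul_of_nonneg_left ?_ (hpos x).le
    have h1 : (R x i - x i) ^ 2 ≤ ‖R x - x‖ ^ 2 := by
      have := PiLp.norm_apply_le (R x - x) i
      rw [← sq_abs]
      exact pow_le_pow_left₀ (abs_nonneg _) this 2
    have h2 := mul_nonneg (sq_nonneg σ) (frobSq_nonneg (fderiv ℝ R x))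
    linarith
  have hI : Integrable (fun x => p x * (R x i - x i) ^ 2) := by
    refine hfin.mono' ?_ (Eventually.of_forall fun x => ?_)
    · have h2 := hp.continuous
      have h3 := hRi.continuous
      exact Continuous.aestronglyMeasurable (by fun_prop)
    · rw [Real.norm_of_nonneg (mul_nonneg (hpos x).le (sq_nonneg _))]
      exact hle x
  refine ⟨hI, (integral_mono hI hfin hle).trans ?_⟩
  have hid : ∀ x : EuclideanSpace ℝ (Fin d), p x * (‖id x - x‖ ^ 2
      + σ ^ 2 * frobSq d (fderiv ℝ id x)) = σ ^ 2 * d * p x := by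
    intro x
    simp [frobSq, fderiv_id]
    ring
  have h := hmin id contDiff_id (by simp only [hid]; exact hpI.const_mul _)
  simp only [rcaeLoss, hid, integral_const_mul, hp_int, mul_one] at h
  exact h

/-- The global bound `∫ p |R - x|² ≤ σ² d` only gives local `L²` norms `O(σ⁻¹)` for the rescaled
error; positivity of `p` on compact sets turns the weight `p` into an arbitrary cutoff. -/
lemma locRate_err (hp : ContDiff ℝ 3 p) (hpos : ∀ x, 0 < p x)
    {r : ℝ → EuclideanSpace ℝ (Fin d) → EuclideanSpace ℝ (Fin d)} (i : Fin d)
    (hr : ∀ σ > 0, ContDiff ℝ 2 (r σ))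
    (hl2 : ∀ σ > 0, Integrable (fun x => p x * (r σ x i - x i) ^ 2) ∧
      ∫ x, p x * (r σ x i - x i) ^ 2 ≤ σ ^ 2 * d) :
    LocRate (fun σ => err p (r σ) σ i) fun σ => (σ ^ 2)⁻¹ := by
  intro χ hχ hχc hχ0
  have hb := (contDiff_score hp hpos i).continuous
  have hq : Continuous fun x => χ x * (p x)⁻¹ :=
    hχ.mul (hp.continuous.inv₀ fun x => (hpos x).ne')
  obtain ⟨A, hA⟩ := hq.bounded_above_of_compact_support hχc.mul_right
  have hA0 : 0 ≤ A := (norm_nonneg _).trans (hA 0)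
  have hχp : ∀ x, χ x ≤ A * p x := fun x => by
    have := (le_abs_self _).trans (hA x)
    rwa [← div_eq_mul_inv, div_le_iff₀ (hpos x)] at this
  have hIb : Integrable fun x => χ x * score p i x ^ 2 :=
    (hχ.mul (hb.pow 2)).integrable_of_hasCompactSupport hχc.mul_right
  have hIb0 : 0 ≤ ∫ x, χ x * score p i x ^ 2 :=
    integral_nonneg fun x => mul_nonneg (hχ0 x) (sq_nonneg _)
  refine ⟨2 * A * d + 2 * ∫ x, χ x * score p i x ^ 2, ?_⟩
  filter_upwards [self_mem_nhdsWithin, Ioo_mem_nhdsGT (zero_lt_one' ℝ)] with σ hσ hσ1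
  have hσ0 : (0 : ℝ) < σ := hσ
  obtain ⟨hI, hle⟩ := hl2 σ hσ
  have hz := (contDiff_err (σ := σ) hp hpos (hr σ hσ) i).continuous
  calc ∫ x, χ x * err p (r σ) σ i x ^ 2
      ≤ ∫ x, (2 * A / σ ^ 4 * (p x * (r σ x i - x i) ^ 2) + 2 * (χ x * score p i x ^ 2)) := by
        refine integral_mono ((hχ.mul (hz.pow 2)).integrable_of_hasCompactSupport hχc.mul_right)
          ((hI.const_mul _).add (hIb.const_mul _)) fun x => ?_
        have h1 : err p (r σ) σ i x ^ 2
            ≤ 2 / σ ^ 4 * (r σ x i - x i) ^ 2 + 2 * score p i x ^ 2 := by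
          have h2 : 2 / σ ^ 4 * (r σ x i - x i) ^ 2 = 2 * ((r σ x i - x i) / σ ^ 2) ^ 2 := by
            field_simp
          rw [h2, err]
          nlinarith [sq_nonneg ((r σ x i - x i) / σ ^ 2 + score p i x)]
        have h3 := mul_le_mul_of_nonneg_left h1 (hχ0 x)
        have h4 := mul_le_mul_of_nonneg_right (hχp x)
          (by positivity : 0 ≤ 2 / σ ^ 4 * (r σ x i - x i) ^ 2)
        have h5 : A * p x * (2 / σ ^ 4 * (r σ x i - x i) ^ 2)
          = 2 * A / σ ^ 4 * (p x * (r σ x i - x i) ^ 2) := by ring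
        simp only
        linarith
    _ = 2 * A / σ ^ 4 * (∫ x, p x * (r σ x i - x i) ^ 2)
          + 2 * ∫ x, χ x * score p i x ^ 2 := by
        rw [integral_add (hI.const_mul _) (hIb.const_mul _), integral_const_mul,
          integral_const_mul]
    _ ≤ 2 * A / σ ^ 4 * (σ ^ 2 * d) + 2 * (∫ x, χ x * score p i x ^ 2) * (σ ^ 2)⁻¹ := by
        have h1 : 1 ≤ (σ ^ 2)⁻¹ := (one_le_inv₀ (by positivity)).2 (by nlinarith [hσ1.2])
        exact add_le_add (mul_le_mul_of_nonneg_left hle (by positivity))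
          (le_mul_of_one_le_right (by positivity) h1)
    _ = _ := by field_simp

end Error

/-- Let `p` be a smooth, everywhere positive probability density on `ℝ^d`,
and for each `σ > 0` let `r_σ` be a twice continuously differentiable minimizer of the RCAE
loss `L_σ` among all twice continuously differentiable functions with finite loss. Then for
every fixed `x`, `r_σ(x) = x + σ² ∇log p(x) + o(σ²)` as `σ → 0⁺`. -/
theorem rcae_minimizer_asymptotics
    (d : ℕ) (p : EuclideanSpace ℝ (Fin d) → ℝ)
    (hp_smooth : ContDiff ℝ (⊤ : ℕ∞) p)
    (hp_pos : ∀ x, 0 < p x)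
    (hp_int : ∫ x, p x = 1)
    (r : ℝ → EuclideanSpace ℝ (Fin d) → EuclideanSpace ℝ (Fin d))
    (hr_smooth : ∀ σ > (0:ℝ), ContDiff ℝ 2 (r σ))
    (hr_fin : ∀ σ > (0:ℝ), Integrable (fun x =>
        p x * (‖r σ x - x‖ ^ 2 + σ ^ 2 * frobSq d (fderiv ℝ (r σ) x))))
    (hr_min : ∀ σ > (0:ℝ),
        ∀ s : EuclideanSpace ℝ (Fin d) → EuclideanSpace ℝ (Fin d), ContDiff ℝ 2 s →
          Integrable (fun x =>
            p x * (‖s x - x‖ ^ 2 + σ ^ 2 * frobSq d (fderiv ℝ s x))) →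
          rcaeLoss d σ p (r σ) ≤ rcaeLoss d σ p s) :
    ∀ x : EuclideanSpace ℝ (Fin d),
      (fun σ => ‖r σ x - x - σ ^ 2 • gradient (fun y => Real.log (p y)) x‖)
        =o[𝓝[>] (0:ℝ)] fun σ => σ ^ 2 := by
  intro x
  have hp3 : ContDiff ℝ 3 p := mod_cast contDiff_infty.1 hp_smooth 3
  have hb : ∀ j, ContDiff ℝ 2 (score p j) := contDiff_score hp3 hp_pos
  have hlim : ∀ i, Tendsto (fun σ => err p (r σ) σ i x) (𝓝[>] 0) (𝓝 0) := by
    intro i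
    refine tendsto_zero_of_locRate (b := score p)
      (G := fun x => ∑ j, score p j x * pd j (score p i) x + lap (score p i) x)
      (fun σ hσ => contDiff_err hp3 hp_pos (hr_smooth σ hσ) i) (fun j => (hb j).continuous) ?_
      (fun σ hσ => err_equation hp3 hp_pos (hr_smooth σ hσ) hσ i
        (euler_lagrange (hp3.of_le (by norm_num)) (hr_smooth σ hσ) (hr_fin σ hσ) (hr_min σ hσ) i))
      (locRate_err hp3 hp_pos i hr_smooth fun σ hσ => l2_bound hp3 hp_pos hp_int
        (hr_smooth σ hσ) (hr_fin σ hσ) (hr_min σ hσ) i) x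
    exact (continuous_finsetSum _ fun j _ => (hb j).continuous.mul
      (continuous_pd ((hb i).of_le (by norm_num)) j)).add (continuous_lap (hb i))
  refine IsLittleO.norm_left ?_
  have hcoord : ∀ i, (fun σ => (r σ x - x - σ ^ 2 • gradient (fun y => Real.log (p y)) x) i)
      =o[𝓝[>] (0 : ℝ)] fun σ => σ ^ 2 := by
    intro i
    have h1 : (fun σ => σ ^ 2 * err p (r σ) σ i x) =o[𝓝[>] (0 : ℝ)] fun σ => σ ^ 2 * (1 : ℝ) :=
      (isBigO_refl _ _).mul_isLittleO ((isLittleO_one_iff ℝ).2 (hlim i))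
    simp only [mul_one] at h1
    refine h1.congr' ?_ EventuallyEq.rfl
    filter_upwards [self_mem_nhdsWithin] with σ hσ
    have hσ0 : σ ≠ 0 := ne_of_gt hσ
    simp only [PiLp.sub_apply, PiLp.smul_apply, smul_eq_mul,
      gradient_log (hp3.of_le (by norm_num)) hp_pos, err]
    field_simp
  have hsum : ∀ v : EuclideanSpace ℝ (Fin d),
      v = ∑ i, v i • EuclideanSpace.single i (1 : ℝ) := by
    intro v
    ext i
    simp [Finset.sum_apply, Pi.single_apply]
  have : (fun σ => ∑ i, (r σ x - x - σ ^ 2 • gradient (fun y => Real.log (p y)) x) i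
      • EuclideanSpace.single i (1 : ℝ)) =o[𝓝[>] (0 : ℝ)] fun σ => σ ^ 2 := by
    refine IsLittleO.fun_sum fun i _ => IsBigO.trans_isLittleO ?_ (hcoord i)
    refine IsBigO.of_bound 1 (Eventually.of_forall fun σ => ?_)
    rw [norm_smul]
    simp
  exact this.congr_left fun σ => (hsum _).symm
end

section
/- Let p : ℝ^d → ℝ be a continuously differentiable probability density function with p(x) ≠ 0 for all x ∈ ℝ^d, and fix σ > 0. Let r : ℝ^d → ℝ^d be twice continuously differentiable with finite RCAE loss L_σ(r), and suppose r is a minimizer in the sense that L_σ(r) ≤ L_σ(r + φ) for every smooth compactly supported φ : ℝ^d → ℝ^d. Then r satisfies the Euler–Lagrange equation: for every x ∈ ℝ^d and every component k ∈ {1,…,d}, r_k(x) − x_k = σ² ∑_{i=1}^d ( ∂log p(x)/∂x_i · ∂r_k(x)/∂x_i + ∂²r_k(x)/∂x_i² ). -/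
/-!
The equation is the vanishing of the first variation of the loss. Perturbing `r` along
`t • (g • e_k)`, with `g` a scalar test function, changes the integrand by the exact quadratic
polynomial `2 t A + t² B` (`integrand_expand`), where
`A = p ((r_k - x_k) g + σ² ∑ j, ∂_j r_k ∂_j g)`. Both `A` and `B` are continuous with compact
support, so the minimality of `r` gives `0 ≤ 2 t ∫ A + t² ∫ B` for every real `t`, which forces
`∫ A = 0`. Integrating by parts moves the derivatives off `g`, giving `∫ g E = 0` for all `g`, with
`E = p (r_k - x_k) - σ² ∑ j, ∂_j (p ∂_j r_k)`. Since `E` is continuous, the fundamental lemma of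
the calculus of variations yields `E = 0` everywhere, and dividing by `p > 0` turns `∂_j p / p` into
`∂_j log p`.
-/

open MeasureTheory Real

lemma eq_zero_of_quadratic_nonneg {a b : ℝ} (h : ∀ t : ℝ, 0 ≤ 2 * t * a + t ^ 2 * b) :
    a = 0 := by
  have hd := discrim_le_zero (a := b) (b := 2 * a) (c := 0) (fun t => by
    have := h t
    nlinarith)
  unfold discrim at hd
  have h2 : a ^ 2 ≤ 0 := by nlinarith
  exact pow_eq_zero_iff two_ne_zero |>.1 (le_antisymm h2 (sq_nonneg a))

lemma integral_add_quadratic {α : Type*} [MeasurableSpace α] {μ : Measure α} {F A B : α → ℝ}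
    (hF : Integrable F μ) (hA : Integrable A μ) (hB : Integrable B μ) {s t : ℝ} :
    ∫ y, (F y + (s * A y + t * B y)) ∂μ = ∫ y, F y ∂μ + (s * ∫ y, A y ∂μ + t * ∫ y, B y ∂μ) := by
  have h : Integrable (fun y => s * A y + t * B y) μ := (hA.const_mul s).add (hB.const_mul t)
  rw [integral_add hF h, integral_add (hA.const_mul s) (hB.const_mul t),
    integral_const_mul, integral_const_mul]

lemma norm_add_smul_single_sq (d : ℕ) (v : EuclideanSpace ℝ (Fin d)) (k : Fin d) (s : ℝ) :
    ‖v + s • EuclideanSpace.single k (1 : ℝ)‖ ^ 2 = ‖v‖ ^ 2 + 2 * s * v k + s ^ 2 := by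
  rw [norm_add_sq_real, inner_smul_right, EuclideanSpace.inner_single_right, norm_smul]
  simp
  ring

lemma fderiv_coord {d : ℕ} {r : EuclideanSpace ℝ (Fin d) → EuclideanSpace ℝ (Fin d)}
    {x : EuclideanSpace ℝ (Fin d)} (hr : DifferentiableAt ℝ r x) (k : Fin d)
    (v : EuclideanSpace ℝ (Fin d)) :
    fderiv ℝ (fun y => r y k) x v = (fderiv ℝ r x v) k := by
  have h := ((EuclideanSpace.proj k : EuclideanSpace ℝ (Fin d) →L[ℝ] ℝ).hasFDerivAt.comp x
    hr.hasFDerivAt).fderiv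
  have h2 : fderiv ℝ (fun y => r y k) x
      = (EuclideanSpace.proj k : EuclideanSpace ℝ (Fin d) →L[ℝ] ℝ).comp (fderiv ℝ r x) := h
  rw [h2]
  rfl

/-- Along the direction `g • e_k` the loss integrand is exactly quadratic in the step `t`. -/
lemma integrand_expand {d : ℕ} (σ : ℝ) (p : EuclideanSpace ℝ (Fin d) → ℝ)
    {r : EuclideanSpace ℝ (Fin d) → EuclideanSpace ℝ (Fin d)} (hr : Differentiable ℝ r)
    {g : EuclideanSpace ℝ (Fin d) → ℝ} (hg : Differentiable ℝ g) (k : Fin d) (t : ℝ)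
    (x : EuclideanSpace ℝ (Fin d)) :
    p x * (‖(r x + (t * g x) • EuclideanSpace.single k (1 : ℝ)) - x‖ ^ 2 + σ ^ 2 *
        frobSq d (fderiv ℝ (fun y => r y + (t * g y) • EuclideanSpace.single k (1 : ℝ)) x))
      = p x * (‖r x - x‖ ^ 2 + σ ^ 2 * frobSq d (fderiv ℝ r x))
        + (2 * t * (p x * ((r x k - x k) * g x) + σ ^ 2 * ∑ j : Fin d,
              (p x * fderiv ℝ (fun y => r y k) x (EuclideanSpace.single j 1))
                * fderiv ℝ g x (EuclideanSpace.single j 1))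
          + t ^ 2 * (p x * (g x ^ 2 + σ ^ 2 * ∑ j : Fin d,
              fderiv ℝ g x (EuclideanSpace.single j 1) ^ 2))) := by
  have hD : ∀ v, fderiv ℝ (fun y => r y + (t * g y) • EuclideanSpace.single k (1 : ℝ)) x v
      = fderiv ℝ r x v + (t * fderiv ℝ g x v) • EuclideanSpace.single k (1 : ℝ) := by
    intro v
    have h := ((hr x).hasFDerivAt.add
      (((hg x).hasFDerivAt.const_mul t).smul_const (EuclideanSpace.single k (1 : ℝ)))).fderiv
    have h2 := congrArg (fun L => L v) h
    simpa [Pi.add_def] using h2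
  have hF : frobSq d (fderiv ℝ (fun y => r y + (t * g y) • EuclideanSpace.single k (1 : ℝ)) x)
      = frobSq d (fderiv ℝ r x)
        + 2 * t * (∑ j : Fin d, fderiv ℝ (fun y => r y k) x (EuclideanSpace.single j 1)
            * fderiv ℝ g x (EuclideanSpace.single j 1))
        + t ^ 2 * ∑ j : Fin d, fderiv ℝ g x (EuclideanSpace.single j 1) ^ 2 := by
    unfold frobSq
    rw [Finset.mul_sum, Finset.mul_sum, ← Finset.sum_add_distrib, ← Finset.sum_add_distrib]
    refine Finset.sum_congr rfl fun j _ => ?_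
    rw [hD, norm_add_smul_single_sq, fderiv_coord (hr x)]
    ring
  have hS : ∑ j : Fin d, (p x * fderiv ℝ (fun y => r y k) x (EuclideanSpace.single j 1))
        * fderiv ℝ g x (EuclideanSpace.single j 1)
      = p x * ∑ j : Fin d, fderiv ℝ (fun y => r y k) x (EuclideanSpace.single j 1)
        * fderiv ℝ g x (EuclideanSpace.single j 1) := by
    rw [Finset.mul_sum]
    exact Finset.sum_congr rfl fun j _ => by ring
  rw [hF, hS, add_sub_right_comm, norm_add_smul_single_sq, PiLp.sub_apply]
  ring

/-- Let `p` be a continuously differentiable, everywhere positive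
probability density on `ℝ^d` and `σ > 0`. If `r` is twice continuously differentiable with
finite RCAE loss and minimizes the loss against all smooth compactly supported
perturbations, then `r` satisfies the Euler–Lagrange equation
`r_k(x) − x_k = σ² ∑_i (∂log p/∂x_i ⋅ ∂r_k/∂x_i + ∂²r_k/∂x_i²)` for all `x` and `k`. -/
theorem rcae_euler_lagrange
    (d : ℕ) (p : EuclideanSpace ℝ (Fin d) → ℝ)
    (hp_smooth : ContDiff ℝ 1 p)
    (hp_pos : ∀ x, 0 < p x)
    (hp_int : ∫ x, p x = 1)
    (σ : ℝ) (hσ : 0 < σ)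
    (r : EuclideanSpace ℝ (Fin d) → EuclideanSpace ℝ (Fin d))
    (hr_smooth : ContDiff ℝ 2 r)
    (hr_fin : Integrable (fun x =>
        p x * (‖r x - x‖ ^ 2 + σ ^ 2 * frobSq d (fderiv ℝ r x))))
    (hr_min : ∀ φ : EuclideanSpace ℝ (Fin d) → EuclideanSpace ℝ (Fin d),
        ContDiff ℝ (⊤ : ℕ∞) φ → HasCompactSupport φ →
        rcaeLoss d σ p r ≤ rcaeLoss d σ p (fun x => r x + φ x)) :
    ∀ x : EuclideanSpace ℝ (Fin d), ∀ k : Fin d,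
      r x k - x k = σ ^ 2 * ∑ i : Fin d,
        (fderiv ℝ (fun y => Real.log (p y)) x (EuclideanSpace.single i 1)
            * fderiv ℝ (fun y => r y k) x (EuclideanSpace.single i 1)
          + fderiv ℝ (fun y =>
              fderiv ℝ (fun z => r z k) y (EuclideanSpace.single i 1)) x
              (EuclideanSpace.single i 1)) := by
  intro x k
  have hr_diff : Differentiable ℝ r := hr_smooth.differentiable (by norm_num)
  have hu : ContDiff ℝ 2 (fun y => r y k) :=
    (EuclideanSpace.proj k : EuclideanSpace ℝ (Fin d) →L[ℝ] ℝ).contDiff.comp hr_smooth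
  have hDu : ∀ v, ContDiff ℝ 1 (fun y => fderiv ℝ (fun z => r z k) y v) := fun v =>
    (hu.fderiv_right (m := 1) (by norm_num)).clm_apply contDiff_const
  have hw : ∀ v, ContDiff ℝ 1 (fun y => p y * fderiv ℝ (fun z => r z k) y v) := fun v =>
    hp_smooth.mul (hDu v)
  have hxk : Continuous fun y : EuclideanSpace ℝ (Fin d) => y k :=
    (EuclideanSpace.proj k : EuclideanSpace ℝ (Fin d) →L[ℝ] ℝ).continuous
  have hc0 : Continuous fun y => p y * (r y k - y k) :=
    hp_smooth.continuous.mul (hu.continuous.sub hxk)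
  have hc1 : ∀ v, Continuous fun y =>
      fderiv ℝ (fun y => p y * fderiv ℝ (fun z => r z k) y v) y v := fun v =>
    ((hw v).continuous_fderiv (by norm_num)).clm_apply continuous_const
  -- `E` is the Euler-Lagrange expression in divergence form.
  set E : EuclideanSpace ℝ (Fin d) → ℝ := fun y => p y * (r y k - y k) - σ ^ 2 * ∑ j : Fin d,
    fderiv ℝ (fun y => p y * fderiv ℝ (fun z => r z k) y (EuclideanSpace.single j 1)) y
      (EuclideanSpace.single j 1) with hE
  have hE_cont : Continuous E :=
    hc0.sub (continuous_const.mul (continuous_finsetSum _ fun j _ => hc1 _))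
  have key : ∀ g : EuclideanSpace ℝ (Fin d) → ℝ, ContDiff ℝ (⊤ : ℕ∞) g → HasCompactSupport g →
      ∫ y, g y • E y = 0 := by
    intro g hg hgc
    have hg_diff : Differentiable ℝ g := hg.differentiable (by simp)
    have hDg : ∀ v, Continuous fun y => fderiv ℝ g y v := fun v =>
      (hg.continuous_fderiv (by simp)).clm_apply continuous_const
    have hDgc : ∀ v, HasCompactSupport fun y => fderiv ℝ g y v := fun v =>
      hgc.fderiv_apply (𝕜 := ℝ) v
    have hA0 : Integrable fun y => p y * ((r y k - y k) * g y) := by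
      refine Continuous.integrable_of_hasCompactSupport
        (hp_smooth.continuous.mul ((hu.continuous.sub hxk).mul hg.continuous)) ?_
      exact (hgc.mul_left (f := fun y => r y k - y k)).mul_left
    have hA1 : ∀ v, Integrable fun y =>
        (p y * fderiv ℝ (fun z => r z k) y v) * fderiv ℝ g y v := fun v =>
      ((hw v).continuous.mul (hDg v)).integrable_of_hasCompactSupport (hDgc v).mul_left
    have hA1' : ∀ v, Integrable fun y =>
        fderiv ℝ (fun y => p y * fderiv ℝ (fun z => r z k) y v) y v * g y := fun v =>
      ((hc1 v).mul hg.continuous).integrable_of_hasCompactSupport hgc.mul_left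
    have hA1'' : ∀ v, Integrable fun y =>
        (p y * fderiv ℝ (fun z => r z k) y v) * g y := fun v =>
      ((hw v).continuous.mul hg.continuous).integrable_of_hasCompactSupport hgc.mul_left
    have hAs : Integrable fun y => σ ^ 2 * ∑ j : Fin d,
        (p y * fderiv ℝ (fun z => r z k) y (EuclideanSpace.single j 1))
          * fderiv ℝ g y (EuclideanSpace.single j 1) :=
      (integrable_finsetSum _ fun j _ => hA1 _).const_mul _
    have hA : Integrable fun y => p y * ((r y k - y k) * g y) + σ ^ 2 * ∑ j : Fin d,
        (p y * fderiv ℝ (fun z => r z k) y (EuclideanSpace.single j 1))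
          * fderiv ℝ g y (EuclideanSpace.single j 1) := hA0.add hAs
    have hB : Integrable fun y => p y * (g y ^ 2 + σ ^ 2 * ∑ j : Fin d,
        fderiv ℝ g y (EuclideanSpace.single j 1) ^ 2) := by
      have h0 : Integrable fun y => p y * g y * g y :=
        ((hp_smooth.continuous.mul hg.continuous).mul
          hg.continuous).integrable_of_hasCompactSupport hgc.mul_left
      have h1 : ∀ v, Integrable fun y => p y * fderiv ℝ g y v * fderiv ℝ g y v := fun v =>
        ((hp_smooth.continuous.mul (hDg v)).mul
          (hDg v)).integrable_of_hasCompactSupport (hDgc v).mul_left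
      have h2 : Integrable fun y => p y * g y * g y + σ ^ 2 * ∑ j : Fin d,
          p y * fderiv ℝ g y (EuclideanSpace.single j 1)
            * fderiv ℝ g y (EuclideanSpace.single j 1) :=
        h0.add ((integrable_finsetSum _ fun j _ => h1 _).const_mul _)
      refine h2.congr (ae_of_all _ fun y => ?_)
      simp only [mul_add, Finset.mul_sum]
      congr 1
      · ring
      · exact Finset.sum_congr rfl fun j _ => by ring
    have hvar := eq_zero_of_quadratic_nonneg (a := ∫ y, (p y * ((r y k - y k) * g y)
        + σ ^ 2 * ∑ j : Fin d,
          (p y * fderiv ℝ (fun z => r z k) y (EuclideanSpace.single j 1))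
          * fderiv ℝ g y (EuclideanSpace.single j 1)))
      (b := ∫ y, p y * (g y ^ 2 + σ ^ 2 * ∑ j : Fin d,
        fderiv ℝ g y (EuclideanSpace.single j 1) ^ 2)) (fun t => by
      have hm := hr_min (fun y => (t * g y) • EuclideanSpace.single k (1 : ℝ))
        ((contDiff_const.mul hg).smul contDiff_const)
        ((hgc.mul_left (f := fun _ => t)).smul_right)
      unfold rcaeLoss at hm
      simp only [integrand_expand σ p hr_diff hg_diff k t] at hm
      rw [integral_add_quadratic hr_fin hA hB] at hm
      linarith)
    rw [integral_add hA0 hAs, integral_const_mul, integral_finsetSum _ fun j _ => hA1 _] at hvar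
    have hparts : ∀ v, ∫ y, (p y * fderiv ℝ (fun z => r z k) y v) * fderiv ℝ g y v
        = - ∫ y, fderiv ℝ (fun y => p y * fderiv ℝ (fun z => r z k) y v) y v * g y := fun v =>
      integral_mul_fderiv_eq_neg_fderiv_mul_of_integrable (hA1' v) (hA1 v) (hA1'' v)
        (fun y _ => (hw v).differentiable (by norm_num) y) (fun y _ => hg_diff y)
    simp only [hparts, Finset.sum_neg_distrib] at hvar
    have hEq : (fun y => g y • E y) = fun y => p y * ((r y k - y k) * g y) - σ ^ 2 * ∑ j : Fin d,
        fderiv ℝ (fun y => p y * fderiv ℝ (fun z => r z k) y (EuclideanSpace.single j 1)) y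
          (EuclideanSpace.single j 1) * g y := by
      funext y
      rw [hE, ← Finset.sum_mul, smul_eq_mul]
      ring
    rw [hEq, integral_sub hA0 ((integrable_finsetSum _ fun j _ => hA1' _).const_mul _),
      integral_const_mul, integral_finsetSum _ fun j _ => hA1' _]
    linarith
  have hE_zero : E = 0 := (hE_cont.ae_eq_iff_eq volume continuous_zero).1
    (ae_eq_zero_of_integral_contDiff_smul_eq_zero hE_cont.locallyIntegrable key)
  have hx : E x = 0 := congrFun hE_zero x
  have hpx : p x ≠ 0 := (hp_pos x).ne'
  have hp_diff : DifferentiableAt ℝ p x := hp_smooth.differentiable (by norm_num) x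
  have hdiv : ∀ v, fderiv ℝ (fun y => p y * fderiv ℝ (fun z => r z k) y v) x v
      = p x * (fderiv ℝ (fun y => Real.log (p y)) x v * fderiv ℝ (fun y => r y k) x v
        + fderiv ℝ (fun y => fderiv ℝ (fun z => r z k) y v) x v) := by
    intro v
    rw [fderiv_fun_mul hp_diff ((hDu v).differentiable (by norm_num) x),
      fderiv.log hp_diff hpx]
    simp only [add_apply, smul_apply, smul_eq_mul]
    field_simp
    ring
  simp only [hE, hdiv, ← Finset.mul_sum] at hx
  apply mul_left_cancel₀ hpx
  linarith
end

section
/- Let p : ℝ^d → ℝ be a three times continuously differentiable probability density function and let x₀ ∈ ℝ^d with p(x₀) ≠ 0. Then the local mean satisfies ‖m_δ(x₀) − x₀ − (δ²/(d+2)) ∇log p(x₀)‖₂ = o(δ³) as δ → 0⁺. -/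
open MeasureTheory Real Filter Topology Asymptotics

/-!
Translate to the origin, with `f h = p (x₀ + h)`, `v = ∇p(x₀)` and `V δ` the volume of the ball of
radius `δ`. Balls are invariant under `h ↦ -h`, so an integrand may be replaced by its even part
before it is estimated. For the mass this leaves the even part of `f`, which is `f 0 + o(‖h‖)`; for
`∫ f h • h` it leaves the odd part of `f`, which is `⟪v, h⟫ + o(‖h‖ ^ 2)`: the second-order Taylor
terms of `f` are even and drop out, and this is where the gain from `o(δ ^ 2)` to `o(δ ^ 3)` comes
from. Together with the second moments of the ball, `∫ ⟪v, h⟫ • h = δ ^ 2 / (d + 2) * V δ • v`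
(`setIntegral_ball_inner_smul`), this yields

* `Z δ = V δ * p x₀ + o(δ * V δ)` (`mass_ball_asymptotics`),
* `∫ f h • h = (δ ^ 2 / (d + 2) * V δ) • v + o(δ ^ 3 * V δ)` (`first_moment_ball_asymptotics`).

Since `v = p x₀ • ∇log p(x₀)`, the difference `∫ f h • h - (δ ^ 2 / (d + 2) * Z δ) • ∇log p(x₀)` is
`o(δ ^ 3 * V δ)`; dividing by `Z δ ~ V δ * p x₀` gives the claim.
-/

lemma setIntegral_ball_comp_isometry {E F : Type*} [NormedAddCommGroup E] [InnerProductSpace ℝ E]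
    [FiniteDimensional ℝ E] [MeasurableSpace E] [BorelSpace E]
    [NormedAddCommGroup F] [NormedSpace ℝ F] (R : E ≃ₗᵢ[ℝ] E) (G : E → F) (δ : ℝ) :
    ∫ h in Metric.ball (0 : E) δ, G (R h) = ∫ h in Metric.ball (0 : E) δ, G h := by
  have := (R.measurePreserving).setIntegral_preimage_emb R.toMeasurableEquiv.measurableEmbedding
    G (Metric.ball 0 δ)
  rw [← this]
  congr 2
  ext h
  simp

lemma integrableOn_ball_of_continuous {E F : Type*} [NormedAddCommGroup E] [InnerProductSpace ℝ E]
    [FiniteDimensional ℝ E] [MeasurableSpace E] [BorelSpace E]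
    [NormedAddCommGroup F] [NormedSpace ℝ F] {G : E → F} (hG : Continuous G) (x : E) (δ : ℝ) :
    IntegrableOn G (Metric.ball x δ) :=
  (hG.continuousOn.integrableOn_compact (isCompact_closedBall x δ)).mono_set
    Metric.ball_subset_closedBall

/-- Symmetrization: over a ball centred at `0` only the even
part of the integrand contributes. -/
lemma setIntegral_ball_symm {E F : Type*} [NormedAddCommGroup E] [InnerProductSpace ℝ E]
    [FiniteDimensional ℝ E] [MeasurableSpace E] [BorelSpace E]
    [NormedAddCommGroup F] [NormedSpace ℝ F] {G : E → F} (hG : Continuous G) (δ : ℝ) :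
    ∫ h in Metric.ball (0 : E) δ, G h
      = ∫ h in Metric.ball (0 : E) δ, (1 / 2 : ℝ) • (G h + G (-h)) := by
  have h2 : ∫ h in Metric.ball (0 : E) δ, G (-h) = ∫ h in Metric.ball (0 : E) δ, G h := by
    simpa using setIntegral_ball_comp_isometry (LinearIsometryEquiv.neg ℝ (E := E)) G δ
  rw [integral_smul, integral_add (integrableOn_ball_of_continuous hG _ _)
    (integrableOn_ball_of_continuous (by fun_prop) _ _), h2, ← two_smul ℝ, smul_smul]
  norm_num

/-- A pointwise bound `o(‖h‖ ^ k)` at the origin integrates to `o(δ ^ k)` times the volume of the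
ball. -/
lemma setIntegral_ball_isLittleO {E F : Type*} [NormedAddCommGroup E] [InnerProductSpace ℝ E]
    [FiniteDimensional ℝ E] [MeasurableSpace E] [BorelSpace E]
    [NormedAddCommGroup F] [NormedSpace ℝ F] {G : E → F} {k : ℕ}
    (hG : G =o[𝓝 0] fun h => ‖h‖ ^ k) :
    (fun δ => ∫ h in Metric.ball (0 : E) δ, G h)
      =o[𝓝[>] (0 : ℝ)] fun δ => δ ^ k * volume.real (Metric.ball (0 : E) δ) := by
  rw [isLittleO_iff]
  intro ε hε
  obtain ⟨r, hr, hb⟩ := Metric.eventually_nhds_iff_ball.1 (isLittleO_iff.1 hG hε)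
  filter_upwards [Ioo_mem_nhdsGT hr] with δ hδ
  have hδ0 : 0 ≤ δ := hδ.1.le
  have : ‖∫ h in Metric.ball (0 : E) δ, G h‖
      ≤ (ε * δ ^ k) * volume.real (Metric.ball (0 : E) δ) := by
    refine norm_setIntegral_le_of_norm_le_const measure_ball_lt_top fun h hh => ?_
    refine (hb h (Metric.ball_subset_ball hδ.2.le hh)).trans ?_
    have : ‖h‖ ≤ δ := (mem_ball_zero_iff.1 hh).le
    rw [norm_pow, norm_norm]
    gcongr
  rwa [Real.norm_of_nonneg (by positivity), ← mul_assoc]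

/-- Coordinate permutations show that all the integrals of `h i ^ 2` agree; their sum is the integral
of `‖h‖ ^ 2`, which is computed in polar coordinates. -/
lemma second_moment_ball_self {d : ℕ} (i : Fin d) (δ : ℝ) (hδ : 0 < δ) :
    ∫ h in Metric.ball (0 : EuclideanSpace ℝ (Fin d)) δ, h i * h i
      = δ ^ 2 / (d + 2) * volume.real (Metric.ball (0 : EuclideanSpace ℝ (Fin d)) δ) := by
  have hd : 0 < d := i.pos
  have : Nonempty (Fin d) := ⟨i⟩
  have hperm : ∀ j, ∫ h in Metric.ball (0 : EuclideanSpace ℝ (Fin d)) δ, h j * h j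
      = ∫ h in Metric.ball (0 : EuclideanSpace ℝ (Fin d)) δ, h i * h i := by
    intro j
    have := setIntegral_ball_comp_isometry
      (LinearIsometryEquiv.piLpCongrLeft 2 ℝ ℝ (Equiv.swap i j)) (fun h => h i * h i) δ
    rw [← this]
    simp [LinearIsometryEquiv.piLpCongrLeft_apply, Equiv.piCongrLeft']
  have hsum : ∫ h in Metric.ball (0 : EuclideanSpace ℝ (Fin d)) δ, ‖h‖ ^ 2
      = d * ∫ h in Metric.ball (0 : EuclideanSpace ℝ (Fin d)) δ, h i * h i := by
    simp_rw [EuclideanSpace.real_norm_sq_eq]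
    rw [integral_finsetSum _ fun j _ => integrableOn_ball_of_continuous (by fun_prop) _ _]
    simp_rw [sq, hperm]
    simp
  have hrad : ∫ h in Metric.ball (0 : EuclideanSpace ℝ (Fin d)) δ, ‖h‖ ^ 2
      = d * (volume.real (Metric.ball (0 : EuclideanSpace ℝ (Fin d)) 1)
          * (δ ^ (d + 2) / (d + 2))) := by
    have h1 := integral_fun_norm_addHaar (volume : Measure (EuclideanSpace ℝ (Fin d)))
      ((Set.Iio δ).indicator fun r : ℝ => r ^ 2)
    have h2 : ∫ h in Metric.ball (0 : EuclideanSpace ℝ (Fin d)) δ, ‖h‖ ^ 2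
        = ∫ h : EuclideanSpace ℝ (Fin d), (Set.Iio δ).indicator (fun r : ℝ => r ^ 2) ‖h‖ := by
      rw [← integral_indicator measurableSet_ball]
      congr 1
      ext h
      simp [Set.indicator]
    have h3 : ∫ y in Set.Ioi (0 : ℝ), y ^ (d - 1) • (Set.Iio δ).indicator (fun r : ℝ => r ^ 2) y
        = δ ^ (d + 2) / (d + 2) := by
      have : ∀ y : ℝ, y ^ (d - 1) • (Set.Iio δ).indicator (fun r : ℝ => r ^ 2) y
          = (Set.Iio δ).indicator (fun r : ℝ => r ^ (d + 1)) y := by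
        intro y
        by_cases hy : y ∈ Set.Iio δ
        · simp only [Set.indicator_of_mem hy, smul_eq_mul, ← pow_add]
          congr 1
          omega
        · simp [Set.indicator_of_notMem hy]
      simp_rw [this]
      rw [setIntegral_indicator measurableSet_Iio, Set.Ioi_inter_Iio,
        ← integral_Ioc_eq_integral_Ioo, ← intervalIntegral.integral_of_le hδ.le, integral_pow]
      push_cast
      rw [zero_pow (by omega)]
      ring
    rw [h2, h1, finrank_euclideanSpace_fin, h3]
    simp
  have hvol : volume.real (Metric.ball (0 : EuclideanSpace ℝ (Fin d)) δ)
      = δ ^ d * volume.real (Metric.ball (0 : EuclideanSpace ℝ (Fin d)) 1) := by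
    rw [measureReal_def, Measure.addHaar_ball _ _ hδ.le, finrank_euclideanSpace_fin,
      ENNReal.toReal_mul, ENNReal.toReal_ofReal (by positivity), measureReal_def]
  have hd' : (d : ℝ) ≠ 0 := by positivity
  rw [hsum] at hrad
  rw [mul_left_cancel₀ hd' hrad, hvol]
  ring

/-- The reflection in the hyperplane `h i = 0` changes the sign of the integrand. -/
lemma second_moment_ball_ne {d : ℕ} {i j : Fin d} (hij : i ≠ j) (δ : ℝ) :
    ∫ h in Metric.ball (0 : EuclideanSpace ℝ (Fin d)) δ, h i * h j = 0 := by
  have := setIntegral_ball_comp_isometry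
    ((ℝ ∙ (EuclideanSpace.single i (1 : ℝ)))ᗮ.reflection) (fun h => h i * h j) δ
  have h2 : ∀ h : EuclideanSpace ℝ (Fin d),
     ((ℝ ∙ (EuclideanSpace.single i (1 : ℝ)))ᗮ.reflection h) i *
     ((ℝ ∙ (EuclideanSpace.single i (1 : ℝ)))ᗮ.reflection h) j = - (h i * h j) := by
    intro h
    simp [Submodule.reflection_orthogonal_apply, Submodule.reflection_singleton_apply, hij.symm,
      EuclideanSpace.inner_single_left]
    ring
  simp_rw [h2, integral_neg] at this
  linarith

lemma setIntegral_ball_inner_smul {d : ℕ} (v : EuclideanSpace ℝ (Fin d)) {δ : ℝ} (hδ : 0 < δ) :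
    ∫ h in Metric.ball (0 : EuclideanSpace ℝ (Fin d)) δ, (inner ℝ v h : ℝ) • h
      = (δ ^ 2 / (d + 2) * volume.real (Metric.ball (0 : EuclideanSpace ℝ (Fin d)) δ)) • v := by
  ext i
  have h1 : (∫ h in Metric.ball (0 : EuclideanSpace ℝ (Fin d)) δ, (inner ℝ v h : ℝ) • h) i
      = ∫ h in Metric.ball (0 : EuclideanSpace ℝ (Fin d)) δ, ((inner ℝ v h : ℝ) • h) i :=
    ((EuclideanSpace.proj (𝕜 := ℝ) i).integral_comp_comm
      (integrableOn_ball_of_continuous (by fun_prop) _ _)).symm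
  rw [h1]
  have h2 : ∀ h : EuclideanSpace ℝ (Fin d), ((inner ℝ v h : ℝ) • h) i
      = ∑ j, v j * (h j * h i) := by
    intro h
    simp only [PiLp.smul_apply, smul_eq_mul, PiLp.inner_apply, Finset.sum_mul]
    refine Finset.sum_congr rfl fun j _ => ?_
    simp
    ring
  simp_rw [h2]
  rw [integral_finsetSum _ fun j _ => integrableOn_ball_of_continuous (by fun_prop) _ _]
  simp_rw [integral_const_mul]
  rw [Finset.sum_eq_single i (fun j _ hj => by rw [second_moment_ball_ne hj, mul_zero])
    (by simp), second_moment_ball_self i δ hδ]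
  simp
  ring

/-- The derivative of the odd part minus the linear part is the even part of `fderiv ℝ f` minus its
value at `0`, which is `o(‖h‖)` because `fderiv ℝ f` is differentiable at `0`; the mean value
inequality on the closed ball of radius `‖h‖` then gives `o(‖h‖ ^ 2)`. -/
lemma odd_part_isLittleO {E : Type*} [NormedAddCommGroup E] [NormedSpace ℝ E] {f : E → ℝ}
    (hf : ContDiff ℝ 2 f) :
    (fun h => (1 / 2 : ℝ) * (f h - f (-h)) - fderiv ℝ f 0 h) =o[𝓝 0] fun h => ‖h‖ ^ 2 := by
  have hd : Differentiable ℝ f := hf.differentiable (by norm_num)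
  have hd' : DifferentiableAt ℝ (fderiv ℝ f) 0 :=
    (hf.fderiv_right (m := 1) (by norm_num)).differentiable (by norm_num) 0
  set g : E → ℝ := fun h => (1 / 2 : ℝ) * (f h - f (-h)) - fderiv ℝ f 0 h with hg
  set g' : E → E →L[ℝ] ℝ :=
    fun h => (1 / 2 : ℝ) • (fderiv ℝ f h + fderiv ℝ f (-h)) - fderiv ℝ f 0 with hg'
  have hder : ∀ h, HasFDerivAt g (g' h) h := by
    intro h
    have h1 := (hd h).hasFDerivAt
    have h2 : HasFDerivAt (fun h => f (-h)) (-(fderiv ℝ f (-h))) h := by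
      have := (hd (-h)).hasFDerivAt.comp h (hasFDerivAt_id h).neg
      exact this.congr_fderiv (by ext; simp)
    have := ((h1.sub h2).const_mul (1 / 2 : ℝ)).sub (fderiv ℝ f 0).hasFDerivAt
    exact this.congr_fderiv (by simp [hg'])
  have ho : g' =o[𝓝 0] fun h => h := by
    have h1 := hd'.hasFDerivAt.isLittleO
    simp only [sub_zero] at h1
    have h2 := h1.comp_tendsto (k := fun h : E => -h) (l' := 𝓝 0)
      (by simpa using (continuous_neg (G := E)).tendsto 0)
    have h3 : (fun h => fderiv ℝ f (-h) - fderiv ℝ f 0 - fderiv ℝ (fderiv ℝ f) 0 (-h))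
        =o[𝓝 0] fun h : E => h := isLittleO_neg_right.1 h2
    refine ((h1.add h3).const_smul_left (1 / 2 : ℝ)).congr_left fun h => ?_
    ext k
    simp [hg']
    ring
  rw [isLittleO_iff] at ho ⊢
  intro ε hε
  obtain ⟨r, hr, hb⟩ := Metric.eventually_nhds_iff_ball.1 (ho hε)
  filter_upwards [Metric.ball_mem_nhds 0 hr] with h hh
  have := (convex_closedBall (0 : E) ‖h‖).norm_image_sub_le_of_norm_hasFDerivWithin_le
    (f := g) (f' := g') (C := ε * ‖h‖) (fun x _ => (hder x).hasFDerivWithinAt)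
    (fun x hx => by
      have hx' : ‖x‖ ≤ ‖h‖ := mem_closedBall_zero_iff.1 hx
      refine (hb x (mem_ball_zero_iff.2 (hx'.trans_lt (mem_ball_zero_iff.1 hh)))).trans ?_
      gcongr) (x := 0) (y := h) (by simp) (by simp)
  have h0 : g 0 = 0 := by simp [hg]
  rw [h0, sub_zero, sub_zero] at this
  rw [norm_pow, norm_norm]
  linarith [this]

lemma even_part_isLittleO {E : Type*} [NormedAddCommGroup E] [NormedSpace ℝ E] {f : E → ℝ}
    (hf : DifferentiableAt ℝ f 0) :
    (fun h => (1 / 2 : ℝ) * (f h + f (-h)) - f 0) =o[𝓝 0] fun h => h := by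
  have h1 := hf.hasFDerivAt.isLittleO
  simp only [sub_zero] at h1
  have h2 := h1.comp_tendsto (k := fun h : E => -h) (l' := 𝓝 0)
    (by simpa using (continuous_neg (G := E)).tendsto 0)
  have h3 : (fun h => f (-h) - f 0 - fderiv ℝ f 0 (-h)) =o[𝓝 0] fun h : E => h :=
    isLittleO_neg_right.1 h2
  refine ((h1.add h3).const_mul_left (1 / 2 : ℝ)).congr_left fun h => ?_
  simp only [map_neg]
  ring

lemma mass_ball_asymptotics {d : ℕ} {f : EuclideanSpace ℝ (Fin d) → ℝ} (hf : ContDiff ℝ 2 f) :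
    (fun δ => (∫ h in Metric.ball (0 : EuclideanSpace ℝ (Fin d)) δ, f h)
        - volume.real (Metric.ball (0 : EuclideanSpace ℝ (Fin d)) δ) * f 0)
      =o[𝓝[>] (0 : ℝ)] fun δ => δ ^ 1 *
        volume.real (Metric.ball (0 : EuclideanSpace ℝ (Fin d)) δ) := by
  have hc := hf.continuous
  have ho : (fun h => (1 / 2 : ℝ) • ((f h - f 0) + (f (-h) - f 0)))
      =o[𝓝 0] fun h : EuclideanSpace ℝ (Fin d) => ‖h‖ ^ 1 := by
    simp_rw [pow_one]
    refine ((even_part_isLittleO (hf.differentiable (by norm_num) 0)).norm_right).congr_left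
      fun h => ?_
    simp only [smul_eq_mul]
    ring
  refine (setIntegral_ball_isLittleO ho).congr_left fun δ => ?_
  rw [← setIntegral_ball_symm (G := fun h => f h - f 0) (by fun_prop),
    integral_sub (integrableOn_ball_of_continuous hc _ _)
      (integrableOn_ball_of_continuous continuous_const _ _)]
  simp

lemma first_moment_ball_asymptotics {d : ℕ} {f : EuclideanSpace ℝ (Fin d) → ℝ} (hf : ContDiff ℝ 2 f)
    {v : EuclideanSpace ℝ (Fin d)} (hv : HasGradientAt f v 0) :
    (fun δ => (∫ h in Metric.ball (0 : EuclideanSpace ℝ (Fin d)) δ, f h • h)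
        - (δ ^ 2 / (d + 2) * volume.real (Metric.ball (0 : EuclideanSpace ℝ (Fin d)) δ)) • v)
      =o[𝓝[>] (0 : ℝ)] fun δ => δ ^ 3 *
        volume.real (Metric.ball (0 : EuclideanSpace ℝ (Fin d)) δ) := by
  have hc := hf.continuous
  have hL : ∀ h, fderiv ℝ f 0 h = inner ℝ v h := fun h => by
    rw [hv.hasFDerivAt.fderiv]; simp
  have ho : (fun h => (1 / 2 : ℝ) • ((f h - inner ℝ v h) • h + (f (-h) - inner ℝ v (-h)) • (-h)))
      =o[𝓝 0] fun h : EuclideanSpace ℝ (Fin d) => ‖h‖ ^ 3 := by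
    have h1 := (odd_part_isLittleO hf).smul_isBigO
      (isBigO_refl (fun h : EuclideanSpace ℝ (Fin d) => h) (𝓝 0)).norm_right
    refine h1.congr (fun h => ?_) fun h => ?_
    · rw [hL, inner_neg_right]
      module
    · simp only [smul_eq_mul]
      ring
  refine (setIntegral_ball_isLittleO ho).congr' ?_ EventuallyEq.rfl
  filter_upwards [self_mem_nhdsWithin] with δ hδ
  rw [← setIntegral_ball_symm (G := fun h => (f h - inner ℝ v h) • h) (by fun_prop),
    ← setIntegral_ball_inner_smul v hδ, ← integral_sub
      (integrableOn_ball_of_continuous (by fun_prop) _ _)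
      (integrableOn_ball_of_continuous (by fun_prop) _ _)]
  simp_rw [sub_smul]

lemma setIntegral_ball_translate {d : ℕ} {F : Type*} [NormedAddCommGroup F] [NormedSpace ℝ F]
    (x₀ : EuclideanSpace ℝ (Fin d)) (G : EuclideanSpace ℝ (Fin d) → F) (δ : ℝ) :
    ∫ x in Metric.ball x₀ δ, G x
      = ∫ h in Metric.ball (0 : EuclideanSpace ℝ (Fin d)) δ, G (x₀ + h) := by
  rw [← (measurePreserving_add_left volume x₀).setIntegral_preimage_emb
    (measurableEmbedding_addLeft x₀) G]
  simp

/-- For a three times continuously differentiable probability density `p`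
on `ℝ^d` and `x₀` with `p(x₀) ≠ 0`, the local mean
`m_δ(x₀) = Z_δ(x₀)⁻¹ ∫_{B_δ(x₀)} x p(x) dx` satisfies
`m_δ(x₀) = x₀ + (δ²/(d+2)) ∇log p(x₀) + o(δ³)` as `δ → 0⁺`. -/
theorem local_mean_asymptotics
    (d : ℕ) (p : EuclideanSpace ℝ (Fin d) → ℝ)
    (hp_smooth : ContDiff ℝ 3 p)
    (hp_nonneg : ∀ x, 0 ≤ p x)
    (hp_int : ∫ x, p x = 1)
    (x₀ : EuclideanSpace ℝ (Fin d)) (hx₀ : p x₀ ≠ 0)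
    (Z : ℝ → ℝ) (hZ : ∀ δ, Z δ = ∫ x in Metric.ball x₀ δ, p x)
    (m : ℝ → EuclideanSpace ℝ (Fin d))
    (hm : ∀ δ, m δ = (Z δ)⁻¹ • ∫ x in Metric.ball x₀ δ, p x • x) :
    (fun δ => ‖m δ - x₀
        - (δ ^ 2 / (d + 2)) • gradient (fun y => Real.log (p y)) x₀‖)
      =o[𝓝[>] (0:ℝ)] fun δ => δ ^ 3 := by
  set f : EuclideanSpace ℝ (Fin d) → ℝ := fun h => p (x₀ + h) with hf_def
  set V : ℝ → ℝ := fun δ => volume.real (Metric.ball (0 : EuclideanSpace ℝ (Fin d)) δ) with hV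
  have hf : ContDiff ℝ 2 f :=
    (hp_smooth.of_le (by norm_num)).comp (contDiff_const.add contDiff_id)
  have hc := hf.continuous
  have hf0 : f 0 = p x₀ := by simp [hf_def]
  have hp : HasGradientAt p (gradient p x₀) x₀ :=
    (hp_smooth.differentiable (by norm_num) x₀).hasGradientAt
  have hfg : HasGradientAt f (gradient p x₀) 0 := by
    have h0 : HasFDerivAt p (InnerProductSpace.toDual ℝ _ (gradient p x₀)) (x₀ + 0) := by
      rw [add_zero]; exact hp.hasFDerivAt
    exact hasGradientAt_iff_hasFDerivAt.2
      ((h0.comp 0 ((hasFDerivAt_id _).const_add x₀)).congr_fderiv (by ext; simp))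
  set s := gradient (fun y => Real.log (p y)) x₀ with hs_def
  have hs : gradient p x₀ = p x₀ • s := by
    have h1 : HasGradientAt (fun y => Real.log (p y)) ((p x₀)⁻¹ • gradient p x₀) x₀ :=
      hasGradientAt_iff_hasFDerivAt.2
        ((hp.hasFDerivAt.log hx₀).congr_fderiv (by simp))
    rw [hs_def, h1.gradient, smul_inv_smul₀ hx₀]
  have hVpos : ∀ δ, 0 < δ → 0 < V δ := fun δ hδ =>
    ENNReal.toReal_pos (Metric.measure_ball_pos _ _ hδ).ne' measure_ball_lt_top.ne
  have hZf : ∀ δ, Z δ = ∫ h in Metric.ball (0 : EuclideanSpace ℝ (Fin d)) δ, f h := fun δ => by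
    rw [hZ, setIntegral_ball_translate]
  have hZV : (fun δ => Z δ - V δ * p x₀) =o[𝓝[>] (0 : ℝ)] fun δ => δ ^ 1 * V δ := by
    simpa only [hZf, hf0] using mass_ball_asymptotics hf
  have hN := first_moment_ball_asymptotics hf hfg
  have hid : Tendsto (fun δ : ℝ => δ) (𝓝[>] (0 : ℝ)) (𝓝 0) := tendsto_nhdsWithin_of_tendsto_nhds
    tendsto_id
  have hequiv : Z ~[𝓝[>] (0 : ℝ)] fun δ => V δ * p x₀ := by
    have h1 : (fun δ : ℝ => δ ^ 1 * V δ) =O[𝓝[>] (0 : ℝ)] fun δ => V δ * p x₀ := by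
      have h2 : (fun δ : ℝ => δ ^ 1) =O[𝓝[>] (0 : ℝ)] fun _ => p x₀ := by
        simpa using (hid.isBigO_one ℝ).trans (isBigO_const_const (1 : ℝ) hx₀ _)
      simpa only [mul_comm] using h2.mul (isBigO_refl V _)
    exact hZV.trans_isBigO h1
  have hZinv : (fun δ => (Z δ)⁻¹) =O[𝓝[>] (0 : ℝ)] fun δ => (V δ)⁻¹ := by
    refine hequiv.inv.isBigO.trans ?_
    simp only [Pi.inv_def, mul_inv, mul_comm _ (p x₀)⁻¹]
    exact (isBigO_refl _ _).const_mul_left _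
  -- `(0 : ℝ)⁻¹ = 0`, so the cancellations `(Z δ)⁻¹ • Z δ • y = y` below need `Z δ ≠ 0`.
  have hZne : ∀ᶠ δ in 𝓝[>] (0 : ℝ), Z δ ≠ 0 := by
    filter_upwards [hequiv.symm.isBigO.eq_zero_imp, self_mem_nhdsWithin] with δ h hδ hZ0
    exact mul_ne_zero (hVpos δ hδ).ne' hx₀ (h hZ0)
  have hsecond : (fun δ : ℝ => (δ ^ 2 / (d + 2) * (Z δ - V δ * p x₀)) • s)
      =o[𝓝[>] (0 : ℝ)] fun δ => δ ^ 3 * V δ := by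
    have h1 : (fun δ : ℝ => δ ^ 2 / (d + 2)) =O[𝓝[>] (0 : ℝ)] fun δ => δ ^ 2 := by
      simp only [div_eq_mul_inv, mul_comm _ ((d : ℝ) + 2)⁻¹]
      exact (isBigO_refl _ _).const_mul_left _
    have h2 := (h1.mul_isLittleO hZV).smul_isBigO (isBigO_const_const s (one_ne_zero' ℝ) _)
    refine h2.congr_right fun δ => ?_
    simp only [smul_eq_mul]
    ring
  have hfinal := hZinv.smul_isLittleO (hN.sub hsecond)
  refine (hfinal.congr' ?_ ?_).norm_left
  · filter_upwards [hZne] with δ hδ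
    have hsplit : ∫ x in Metric.ball x₀ δ, p x • x
        = Z δ • x₀ + ∫ h in Metric.ball (0 : EuclideanSpace ℝ (Fin d)) δ, f h • h := by
      rw [setIntegral_ball_translate, hZf, ← integral_smul_const, ← integral_add
        (integrableOn_ball_of_continuous (by fun_prop) _ _)
        (integrableOn_ball_of_continuous (by fun_prop) _ _)]
      simp_rw [hf_def, smul_add]
    rw [hm, hsplit, hs, smul_add, inv_smul_smul₀ hδ, add_sub_cancel_left]
    have : (δ ^ 2 / (d + 2)) • s = (Z δ)⁻¹ • (δ ^ 2 / (d + 2) * Z δ) • s := by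
      rw [mul_comm, mul_smul, inv_smul_smul₀ hδ]
    rw [this, ← smul_sub]
    congr 1
    module
  · filter_upwards [self_mem_nhdsWithin] with δ hδ
    rw [smul_eq_mul, mul_left_comm]
    exact (congrArg _ (inv_mul_cancel₀ (hVpos δ hδ).ne')).trans (mul_one _)
end
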